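/- arXiv:1606.09389 — 3 statements merged into one kernel-verified Lean document; each statement's English description precedes it below -/
import Mathlib

section
/- Let G be a finite bipartite graph with maximum degree Δ(G) = 2r for some integer r ≥ 2, such that the degree of every vertex of G lies in the set {1, 2, 2r−2, 2r−1, 2r}. Then G has a cyclic interval 2r-coloring. -/
open SimpleGraph

/-- The set of colors appearing on edges incident to `v` under the edge coloring `c`. -/
def colorsAt {V : Type*} (G : SimpleGraph V) (c : Sym2 V → ℕ) (v : V) : Set ℕ :=
  c '' (G.incidenceSet v)

/-- A set of natural numbers is an interval of consecutive integers. -/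
def IsIntervalSet (S : Set ℕ) : Prop := ∃ a b : ℕ, S = Set.Icc a b

/-- A proper edge coloring of `G` with colors `1, …, t`: every edge gets a color in
`{1, …, t}` and distinct edges sharing a vertex get distinct colors. -/
def IsProperEdgeColoring {V : Type*} (G : SimpleGraph V) (t : ℕ) (c : Sym2 V → ℕ) : Prop :=
  (∀ e ∈ G.edgeSet, c e ∈ Set.Icc 1 t) ∧
  ∀ e₁ ∈ G.edgeSet, ∀ e₂ ∈ G.edgeSet, e₁ ≠ e₂ → (∃ v, v ∈ e₁ ∧ v ∈ e₂) → c e₁ ≠ c e₂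

/-- A cyclic interval `t`-coloring of `G`: a proper edge coloring with colors `1, …, t`
such that at every vertex the set of incident colors, or its complement in `{1, …, t}`,
is an interval of consecutive integers. -/
def IsCyclicIntervalColoring {V : Type*} (G : SimpleGraph V) (t : ℕ) (c : Sym2 V → ℕ) : Prop :=
  IsProperEdgeColoring G t c ∧
  ∀ v : V, IsIntervalSet (colorsAt G c v) ∨ IsIntervalSet (Set.Icc 1 t \ colorsAt G c v)

/-!
Group the colors into the pairs `{1, 2}, {3, 4}, …, {2r - 1, 2r}`. It suffices to find a proper
`2r`-edge-coloring in which the edges at each vertex `v` use colors from at most `⌈d(v) / 2⌉` pairs: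
if `d(v) ≤ 2`, then all colors at `v` lie in one pair, and if `d(v) ≥ 2r - 2`, then all colors
missing at `v` lie in one pair, and every subset of a pair of consecutive integers is an interval.

Such a coloring comes from two applications of König's edge coloring theorem for bipartite
multigraphs. Cutting each vertex into vertices of degree at most two and properly `2`-coloring the
edges gives an orientation with at most `⌈d(v) / 2⌉` edges leaving and at most `⌈d(v) / 2⌉` edges
entering each `v`. Now let each edge join its tail in one copy of the vertex set to its head in a
second copy, add `r - ⌈d(v) / 2⌉` edges between the two copies of each `v`, and properly `r`-color
the edges. The pair of an edge is its color here, and the member of that pair is given by the side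
from which the edge leaves: two edges at `v` in the same pair are oriented differently at `v`. The
added edges at `v` take away `r - ⌈d(v) / 2⌉` pairs, so `⌈d(v) / 2⌉` of them remain.
-/

section InjOnFibers

open Finset

variable {D E P Q C : Type*}

/-- The map `c` separates the points of every fiber of `p`. If `p` sends each edge of a bipartite
multigraph to its end on one side, this says that the edge coloring `c` is proper on that side; a
bipartite multigraph is thus encoded by the two end maps `p : E → P` and `q : E → Q`. -/
def InjOnFibers (p : E → P) (c : E → C) : Prop :=
  ∀ ⦃e e' : E⦄, p e = p e' → c e = c e' → e = e'

theorem InjOnFibers.comp_injective {p : E → P} {c : E → C} (hc : InjOnFibers p c) {g : D → E}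
    (hg : Function.Injective g) : InjOnFibers (p ∘ g) (c ∘ g) :=
  fun _ _ hp h => hg (hc hp h)

theorem InjOnFibers.of_comp_left {g : P → Q} {p : E → P} {c : E → C}
    (hc : InjOnFibers (g ∘ p) c) : InjOnFibers p c :=
  fun _ _ hp h => hc (congrArg g hp) h

theorem InjOnFibers.extend_last {p : E → P} {M : Finset E} [DecidableEq E] {k : ℕ}
    {c : {e // e ∉ M} → Fin k} (hM : Set.InjOn p M) (hc : InjOnFibers (fun e => p e.1) c) :
    InjOnFibers p fun e => if he : e ∈ M then Fin.last k else (c ⟨e, he⟩).castSucc := by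
  intro e e' hp h
  by_cases he : e ∈ M <;> by_cases he' : e' ∈ M
  · exact hM he he' hp
  · simp [he, he', (Fin.castSucc_lt_last _).ne'] at h
  · simp [he, he', (Fin.castSucc_lt_last _).ne] at h
  · simp only [he, he', dite_false, Fin.castSucc_inj] at h
    exact congrArg Subtype.val (hc (e := ⟨e, he⟩) (e' := ⟨e', he'⟩) hp h)

theorem injOn_of_card_fiber_le_one [DecidableEq P] {p : E → P} {M : Finset E}
    (hM : ∀ x, #{e ∈ M | p e = x} ≤ 1) : Set.InjOn p M := fun e he e' he' h =>
  card_le_one.1 (hM (p e')) e (by simpa [h] using he) e' (by simpa using he')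

end InjOnFibers

section Regular

open Finset

theorem card_filter_image_eq_one {E P Q : Type*} [Fintype P] [DecidableEq E] [DecidableEq Q]
    {m : P → E} {q : E → Q} (h : Function.Bijective (q ∘ m)) (y : Q) :
    #{e ∈ univ.image m | q e = y} = 1 := by
  obtain ⟨x, rfl⟩ := h.2 y
  refine card_eq_one.2 ⟨m x, ext fun e => ?_⟩
  simp only [mem_filter, mem_image, mem_univ, true_and, mem_singleton]
  constructor
  · rintro ⟨⟨x', rfl⟩, hx'⟩
    rw [h.1 hx']
  · rintro rfl
    exact ⟨⟨x, rfl⟩, rfl⟩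

variable {E P Q : Type*} [Fintype E] [DecidableEq P] [DecidableEq Q]

theorem card_eq_card_mul_of_card_fiber_eq [Fintype P] {p : E → P} {k : ℕ}
    (hp : ∀ x, #{e | p e = x} = k) : Fintype.card E = Fintype.card P * k := by
  rw [← card_univ, card_eq_sum_card_fiberwise (f := p) (t := univ) (by simp)]
  simp [hp]

theorem finite_of_card_fiber_eq {p : E → P} {k : ℕ} (hk : 0 < k) (hp : ∀ x, #{e | p e = x} = k) :
    Finite P :=
  Finite.of_surjective p fun x => by
    obtain ⟨e, he⟩ := card_pos.1 (hk.trans_eq (hp x).symm)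
    exact ⟨e, mem_filter_univ e |>.1 he⟩

theorem exists_bijective_comp_section_of_regular {p : E → P} {q : E → Q} {k : ℕ} (hk : 0 < k)
    (hp : ∀ x, #{e | p e = x} = k) (hq : ∀ y, #{e | q e = y} = k) :
    ∃ m : P → E, (∀ x, p (m x) = x) ∧ Function.Bijective (q ∘ m) := by
  let N : P → Finset Q := fun x => image q {e | p e = x}
  have hall : ∀ A : Finset P, #A ≤ #(A.biUnion N) := by
    intro A
    refine Nat.le_of_mul_le_mul_right ?_ hk
    calc #A * k = #{e | p e ∈ A} := by
          rw [← sum_card_fiberwise_eq_card_filter]; simp [hp]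
      _ ≤ #{e | q e ∈ A.biUnion N} := by
          refine card_le_card fun e he => ?_
          simp only [mem_filter_univ, mem_biUnion, N, mem_image] at he ⊢
          exact ⟨p e, he, e, rfl, rfl⟩
      _ = #(A.biUnion N) * k := by
          rw [← sum_card_fiberwise_eq_card_filter]; simp [hq]
  obtain ⟨g, hg, hgN⟩ := (all_card_le_biUnion_card_iff_exists_injective N).1 hall
  simp only [N, mem_image, mem_filter_univ] at hgN
  choose m hmp hmq using hgN
  cases @nonempty_fintype P (finite_of_card_fiber_eq hk hp)
  cases @nonempty_fintype Q (finite_of_card_fiber_eq hk hq)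
  have hcard : Fintype.card P = Fintype.card Q := Nat.eq_of_mul_eq_mul_right hk <|
    (card_eq_card_mul_of_card_fiber_eq hp).symm.trans (card_eq_card_mul_of_card_fiber_eq hq)
  refine ⟨m, hmp, ?_⟩
  obtain rfl : q ∘ m = g := funext hmq
  exact (Fintype.bijective_iff_injective_and_card _).2 ⟨hg, hcard⟩

theorem exists_perfect_matching_of_regular {p : E → P} {q : E → Q} {k : ℕ} (hk : 0 < k)
    (hp : ∀ x, #{e | p e = x} = k) (hq : ∀ y, #{e | q e = y} = k) :
    ∃ M : Finset E, (∀ x, #{e ∈ M | p e = x} = 1) ∧ ∀ y, #{e ∈ M | q e = y} = 1 := by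
  classical
  cases @nonempty_fintype P (finite_of_card_fiber_eq hk hp)
  obtain ⟨m, hm, hbij⟩ := exists_bijective_comp_section_of_regular hk hp hq
  have hid : p ∘ m = id := funext hm
  exact ⟨univ.image m, card_filter_image_eq_one (hid ▸ Function.bijective_id),
    card_filter_image_eq_one hbij⟩

theorem card_filter_mem_add_card_filter_notMem [DecidableEq E] (M : Finset E) (a : E → Prop)
    [DecidablePred a] : #{e ∈ M | a e} + #{e : {e // e ∉ M} | a e} = #{e | a e} := by
  rw [← card_filter_add_card_filter_not (s := ({e | a e} : Finset E)) (· ∈ M),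
    ← card_map (Function.Embedding.subtype (· ∉ M))]
  congr 2 <;> ext e <;> simp [and_comm]

theorem exists_injOnFibers_of_regular {p : E → P} {q : E → Q} {k : ℕ}
    (hp : ∀ x, #{e | p e = x} = k) (hq : ∀ y, #{e | q e = y} = k) :
    ∃ c : E → Fin k, InjOnFibers p c ∧ InjOnFibers q c := by
  classical
  induction k generalizing E with
  | zero =>
    have : IsEmpty E :=
      ⟨fun e => filter_eq_empty_iff.1 (card_eq_zero.1 (hp (p e))) (mem_univ e) rfl⟩
    exact ⟨isEmptyElim, isEmptyElim, isEmptyElim⟩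
  | succ k ih =>
    obtain ⟨M, hMp, hMq⟩ := exists_perfect_matching_of_regular k.succ_pos hp hq
    obtain ⟨c, hcp, hcq⟩ := ih (E := {e // e ∉ M}) (p := fun e => p e) (q := fun e => q e)
      (fun x => by
        have := card_filter_mem_add_card_filter_notMem M (p · = x)
        have := hMp x
        have := hp x
        omega)
      (fun y => by
        have := card_filter_mem_add_card_filter_notMem M (q · = y)
        have := hMq y
        have := hq y
        omega)
    exact ⟨_, hcp.extend_last (injOn_of_card_fiber_le_one fun x => (hMp x).le),
      hcq.extend_last (injOn_of_card_fiber_le_one fun y => (hMq y).le)⟩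

end Regular

section Bounded

open Finset

theorem card_filter_sum {α β : Type*} [Fintype α] [Fintype β] (a : α ⊕ β → Prop)
    [DecidablePred a] : #{e | a e} = #{e | a (.inl e)} + #{e | a (.inr e)} := by
  simp only [card_filter, Fintype.sum_sum_type]

theorem card_fiber_sumElim_sigma_fst {E W : Type*} [Fintype E] [Fintype W] [DecidableEq W]
    (p : E → W) (n : W → ℕ) (w : W) :
    #{e : E ⊕ Σ w, Fin (n w) | Sum.elim p Sigma.fst e = w} = #{e | p e = w} + n w := by
  have hsigma : #{e : Σ w, Fin (n w) | e.1 = w} = n w := by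
    have : ({e | e.1 = w} : Finset (Σ w, Fin (n w))) = univ.map (.sigmaMk w) := by
      ext ⟨w', j⟩
      rw [mem_filter_univ, mem_map]
      constructor
      · rintro rfl
        exact ⟨j, mem_univ j, rfl⟩
      · rintro ⟨i, -, hi⟩
        exact (congrArg Sigma.fst hi).symm
    rw [this, card_map, card_univ, Fintype.card_fin]
  exact (card_filter_sum _).trans (congrArg _ hsigma)

variable {E P Q : Type*} [Fintype E] [DecidableEq P] [DecidableEq Q]

/-- Two copies of the multigraph, one with its sides exchanged, form a `k`-regular multigraph
together with `k - deg w` edges between the two copies of each vertex `w`. -/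
theorem exists_injOnFibers_of_finite [Finite P] [Finite Q] {p : E → P} {q : E → Q} {k : ℕ}
    (hp : ∀ x, #{e | p e = x} ≤ k) (hq : ∀ y, #{e | q e = y} ≤ k) :
    ∃ c : E → Fin k, InjOnFibers p c ∧ InjOnFibers q c := by
  cases nonempty_fintype P
  cases nonempty_fintype Q
  let left : E ⊕ E → P ⊕ Q := Sum.map p q
  let right : E ⊕ E → P ⊕ Q := Sum.elim (.inr ∘ q) (.inl ∘ p)
  let deg : P ⊕ Q → ℕ := Sum.elim (fun x => #{e | p e = x}) (fun y => #{e | q e = y})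
  have hleft : ∀ w, #{e | left e = w} = deg w := by
    rintro (x | y) <;> simp [left, deg, card_filter_sum]
  have hright : ∀ w, #{e | right e = w} = deg w := by
    rintro (x | y) <;> simp [right, deg, card_filter_sum]
  have hdeg : ∀ w, deg w ≤ k := Sum.rec hp hq
  obtain ⟨c, hcl, hcr⟩ := exists_injOnFibers_of_regular (k := k)
    (p := Sum.elim left (Sigma.fst (β := fun w => Fin (k - deg w))))
    (q := Sum.elim right (Sigma.fst (β := fun w => Fin (k - deg w))))
    (fun w => by rw [card_fiber_sumElim_sigma_fst, hleft, Nat.add_sub_cancel' (hdeg w)])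
    (fun w => by rw [card_fiber_sumElim_sigma_fst, hright, Nat.add_sub_cancel' (hdeg w)])
  have hinj : Function.Injective (Sum.inl ∘ Sum.inl : E → (E ⊕ E) ⊕ Σ w, Fin (k - deg w)) :=
    Sum.inl_injective.comp Sum.inl_injective
  exact ⟨_, (hcl.comp_injective hinj).of_comp_left (g := Sum.inl) (p := p),
    (hcr.comp_injective hinj).of_comp_left (g := Sum.inr) (p := q)⟩

/-- **König's edge coloring theorem** for bipartite multigraphs. -/
theorem exists_injOnFibers {p : E → P} {q : E → Q} {k : ℕ}
    (hp : ∀ x, #{e | p e = x} ≤ k) (hq : ∀ y, #{e | q e = y} ≤ k) :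
    ∃ c : E → Fin k, InjOnFibers p c ∧ InjOnFibers q c := by
  obtain ⟨c, hcp, hcq⟩ := exists_injOnFibers_of_finite (k := k)
    (p := Set.rangeFactorization p) (q := Set.rangeFactorization q)
    (by simpa [Subtype.ext_iff] using fun e => hp (p e))
    (by simpa [Subtype.ext_iff] using fun e => hq (q e))
  exact ⟨c, fun _ _ h => hcp (Subtype.ext h), fun _ _ h => hcq (Subtype.ext h)⟩

end Bounded

section Split

open Finset

variable {E P Q C : Type*} [Fintype E] [DecidableEq P] [DecidableEq Q]

theorem exists_rank_on_fibers (p : E → P) :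
    ∃ ρ : E → ℕ, InjOnFibers p ρ ∧ ∀ e, ρ e < #{e' | p e' = p e} := by
  classical
  refine ⟨fun e => ({e' | p e' = p e} : Finset E).toList.idxOf e, fun e e' hp h => ?_, fun e => ?_⟩
  · simp only [hp] at h
    exact (List.idxOf_inj (by simpa using hp)).1 h
  · rw [← length_toList, List.idxOf_lt_length_iff]
    simp

theorem exists_blocks_on_fibers (p : E → P) {k : ℕ} (hk : 0 < k) :
    ∃ b : E → ℕ, (∀ z, #{e | (p e, b e) = z} ≤ k) ∧
      ∀ e, b e < (#{e' | p e' = p e} + k - 1) / k := by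
  obtain ⟨ρ, hρ, hlt⟩ := exists_rank_on_fibers p
  refine ⟨fun e => ρ e / k, fun ⟨x, j⟩ => ?_, fun e => ?_⟩
  · calc #{e | (p e, ρ e / k) = (x, j)} ≤ #(Ico (j * k) ((j + 1) * k)) := by
          refine card_le_card_of_injOn ρ (fun e he => ?_) fun e he e' he' h => ?_
          · obtain ⟨-, rfl⟩ : p e = x ∧ ρ e / k = j := by simpa using he
            exact mem_Ico.2 ⟨Nat.div_mul_le_self _ _,
              (Nat.div_lt_iff_lt_mul hk).1 (Nat.lt_succ_self _)⟩
          · simp only [coe_filter, mem_univ, true_and, Set.mem_ofPred_eq, Prod.mk.injEq] at he he'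
            exact hρ (he.1.trans he'.1.symm) h
      _ = k := by simp [Nat.succ_mul]
  · calc ρ e / k < (ρ e + k) / k := by rw [Nat.add_div_right _ hk]; exact Nat.lt_succ_self _
      _ ≤ (#{e' | p e' = p e} + k - 1) / k := Nat.div_le_div_right (by have := hlt e; omega)

theorem InjOnFibers.card_filter_le {p : E → P} {b : E → ℕ} {f : E → C} [DecidableEq C]
    (hf : InjOnFibers (fun e => (p e, b e)) f) {N : P → ℕ} (hb : ∀ e, b e < N (p e)) (x : P)
    (i : C) : #{e | p e = x ∧ f e = i} ≤ N x := by
  rw [← card_range (N x)]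
  refine card_le_card_of_injOn b (fun e he => ?_) fun e he e' he' h => ?_
  · obtain ⟨rfl, -⟩ : p e = x ∧ f e = i := by simpa using he
    exact mem_coe.2 (mem_range.2 (hb e))
  · simp only [coe_filter, mem_univ, true_and, Set.mem_ofPred_eq] at he he'
    exact hf (Prod.ext (he.1.trans he'.1.symm) h) (he.2.trans he'.2.symm)

theorem exists_equitable_coloring (p : E → P) (q : E → Q) {k : ℕ} (hk : 0 < k) :
    ∃ f : E → Fin k, (∀ x i, #{e | p e = x ∧ f e = i} ≤ (#{e | p e = x} + k - 1) / k) ∧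
      ∀ y i, #{e | q e = y ∧ f e = i} ≤ (#{e | q e = y} + k - 1) / k := by
  obtain ⟨b, hb, hb_lt⟩ := exists_blocks_on_fibers p hk
  obtain ⟨d, hd, hd_lt⟩ := exists_blocks_on_fibers q hk
  obtain ⟨f, hfp, hfq⟩ := exists_injOnFibers hb hd
  exact ⟨f, hfp.card_filter_le (N := fun x => (#{e | p e = x} + k - 1) / k) hb_lt,
    hfq.card_filter_le (N := fun y => (#{e | q e = y} + k - 1) / k) hd_lt⟩

/-- The set `R w` consists of the colors of `n w` additional loops at `w`. -/
theorem exists_injOnFibers_avoiding {W : Type*} [Finite W] [DecidableEq W] {p q : E → W} {k : ℕ}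
    (n : W → ℕ) (hp : ∀ w, #{e | p e = w} + n w ≤ k) (hq : ∀ w, #{e | q e = w} + n w ≤ k) :
    ∃ (c : E → Fin k) (R : W → Finset (Fin k)), InjOnFibers p c ∧ InjOnFibers q c ∧
      (∀ w, #(R w) = n w) ∧ ∀ e, c e ∉ R (p e) ∧ c e ∉ R (q e) := by
  cases nonempty_fintype W
  obtain ⟨c, hcp, hcq⟩ := exists_injOnFibers (k := k)
    (p := Sum.elim p (Sigma.fst (β := fun w => Fin (n w))))
    (q := Sum.elim q (Sigma.fst (β := fun w => Fin (n w))))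
    (fun w => (card_fiber_sumElim_sigma_fst p n w).trans_le (hp w))
    (fun w => (card_fiber_sumElim_sigma_fst q n w).trans_le (hq w))
  refine ⟨c ∘ .inl, fun w => univ.image fun j : Fin (n w) => c (.inr ⟨w, j⟩),
    hcp.comp_injective Sum.inl_injective, hcq.comp_injective Sum.inl_injective,
    fun w => ?_, fun e => ⟨fun h => ?_, fun h => ?_⟩⟩
  · rw [card_image_of_injective, card_univ, Fintype.card_fin]
    intro j j' h
    simpa using hcp (e := .inr ⟨w, j⟩) (e' := .inr ⟨w, j'⟩) rfl h
  · obtain ⟨j, -, hj⟩ := mem_image.1 h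
    exact Sum.inr_ne_inl (hcp rfl hj)
  · obtain ⟨j, -, hj⟩ := mem_image.1 h
    exact Sum.inr_ne_inl (hcq rfl hj)

theorem exists_balanced_split (ends : Bool → E → P) : ∃ f : E → Bool,
    ∀ s b x, #{e | ends s e = x ∧ f e = b} ≤ (#{e | ends s e = x} + 1) / 2 := by
  obtain ⟨f, hf_false, hf_true⟩ := exists_equitable_coloring (ends false) (ends true) two_pos
  refine ⟨fun e => finTwoEquiv (f e), fun s b x => ?_⟩
  simp only [← Equiv.eq_symm_apply]
  cases s
  · exact hf_false x _
  · exact hf_true x _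

end Split

section Orientation

open Finset

variable {E V C : Type*}

/-- The end of the edge `e` on the side `f e`, tagged with that side. If `f` is regarded as an
orientation of a bipartite multigraph, in which `f e` is the side that `e` leaves, then
`sideEnd ends f` gives the tails of the edges and `sideEnd ends (!f ·)` their heads. -/
def sideEnd (ends : Bool → E → V) (f : E → Bool) (e : E) : Bool × V :=
  (f e, ends (f e) e)

theorem sideEnd_eq_iff {ends : Bool → E → V} {f : E → Bool} {e : E} {s : Bool} {v : V} :
    sideEnd ends f e = (s, v) ↔ ends s e = v ∧ f e = s := by
  simp only [sideEnd, Prod.mk.injEq]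
  grind

theorem sideEnd_eq_or (ends : Bool → E → V) (f : E → Bool) (s : Bool) (e : E) :
    sideEnd ends f e = (s, ends s e) ∨ sideEnd ends (!f ·) e = (s, ends s e) := by
  simp only [sideEnd_eq_iff, true_and, Bool.not_eq_eq_eq_not]
  exact Bool.eq_or_eq_not (f e) s

theorem InjOnFibers.prodMk_of_sideEnd {ends : Bool → E → V} {f : E → Bool} {c : E → C}
    (htail : InjOnFibers (sideEnd ends f) c) (hhead : InjOnFibers (sideEnd ends (!f ·)) c)
    (s : Bool) : InjOnFibers (ends s) fun e => (c e, f e) := by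
  intro e e' hends h
  obtain ⟨hc, hf⟩ := Prod.mk.inj h
  rcases sideEnd_eq_or ends f s e with he | he
  · have he' : f e = s := (sideEnd_eq_iff.1 he).2
    exact htail (he.trans (sideEnd_eq_iff.2 ⟨hends.symm, hf ▸ he'⟩).symm) hc
  · have he' : (!f e) = s := (sideEnd_eq_iff.1 he).2
    exact hhead (he.trans (sideEnd_eq_iff.2 ⟨hends.symm, hf ▸ he'⟩).symm) hc

theorem exists_pair_coloring [Fintype E] [Finite V] [DecidableEq V] (ends : Bool → E → V)
    {r : ℕ} (hdeg : ∀ s v, #{e | ends s e = v} ≤ 2 * r) :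
    ∃ c : E → Fin r × Bool, ∀ s, InjOnFibers (ends s) c ∧
      ∀ v, #(({e | ends s e = v} : Finset E).image fun e => (c e).1) ≤
        (#{e | ends s e = v} + 1) / 2 := by
  let half : Bool × V → ℕ := fun w => (#{e | ends w.1 e = w.2} + 1) / 2
  have half_le (w) : half w ≤ r := by
    have := hdeg w.1 w.2
    simp only [half]
    omega
  obtain ⟨f, hf⟩ := exists_balanced_split ends
  have htail : ∀ w, #{e | sideEnd ends f e = w} ≤ half w := fun ⟨s, v⟩ => by
    simpa only [sideEnd_eq_iff] using hf s s v
  have hhead : ∀ w, #{e | sideEnd ends (!f ·) e = w} ≤ half w := fun ⟨s, v⟩ => by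
    simpa only [sideEnd_eq_iff, Bool.not_eq_eq_eq_not] using hf s (!s) v
  obtain ⟨i, R, hi_tail, hi_head, hR, hiR⟩ := exists_injOnFibers_avoiding (fun w => r - half w)
    (fun w => (Nat.add_le_add_right (htail w) _).trans_eq (Nat.add_sub_cancel' (half_le w)))
    (fun w => (Nat.add_le_add_right (hhead w) _).trans_eq (Nat.add_sub_cancel' (half_le w)))
  refine ⟨fun e => (i e, f e), fun s => ⟨hi_tail.prodMk_of_sideEnd hi_head s, fun v => ?_⟩⟩
  have hsub : ({e | ends s e = v} : Finset E).image i ⊆ (R (s, v))ᶜ := by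
    intro j hj
    obtain ⟨e, he, rfl⟩ := mem_image.1 hj
    obtain rfl : ends s e = v := by simpa using he
    rw [mem_compl]
    rcases sideEnd_eq_or ends f s e with h | h <;> rw [← h]
    exacts [(hiR e).1, (hiR e).2]
  calc _ ≤ #(R (s, v))ᶜ := card_le_card hsub
    _ = r - (r - half (s, v)) := by rw [card_compl, hR, Fintype.card_fin]
    _ = half (s, v) := Nat.sub_sub_self (half_le _)

end Orientation

section Graph

open Finset

variable {V : Type*} {G : SimpleGraph V}

theorem exists_ends_of_coloring_bool (col : G.Coloring Bool) :
    ∃ ends : Bool → G.edgeSet → V, ∀ s e v, ends s e = v ↔ v ∈ (e : Sym2 V) ∧ col v = s := by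
  have hex : ∀ (s : Bool) (e : G.edgeSet), ∃ v ∈ (e : Sym2 V), col v = s := by
    rintro s ⟨e, he⟩
    induction e with
    | h v w =>
      have hne : col v ≠ col w := col.valid he
      rcases Bool.eq_or_eq_not s (col v) with rfl | rfl
      · exact ⟨v, Sym2.mem_mk_left v w, rfl⟩
      · exact ⟨w, Sym2.mem_mk_right v w, Bool.eq_not.2 hne.symm⟩
  choose ends hmem hcol using hex
  refine ⟨ends, fun s e v => ⟨fun h => h ▸ ⟨hmem s e, hcol s e⟩, fun ⟨hv, hs⟩ => ?_⟩⟩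
  by_contra hne
  have hadj : G.Adj (ends s e) v := by
    rw [← SimpleGraph.mem_edgeSet, ← (Sym2.mem_and_mem_iff hne).1 ⟨hmem s e, hv⟩]
    exact e.2
  exact col.valid hadj ((hcol s e).trans hs.symm)

theorem card_filter_mem_edgeSet_eq_degree [Fintype V] [DecidableEq V] [DecidableRel G.Adj]
    (v : V) : #{e : G.edgeSet | v ∈ (e : Sym2 V)} = G.degree v := by
  rw [← SimpleGraph.card_incidenceFinset_eq_degree, ← card_map (Function.Embedding.subtype _)]
  congr 1
  ext e
  simp [SimpleGraph.incidenceSet, and_comm]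
theorem exists_pair_edge_coloring [Fintype V] [DecidableEq V] [DecidableRel G.Adj]
    (hbip : G.Colorable 2) {r : ℕ} (hdeg : ∀ v, G.degree v ≤ 2 * r) :
    ∃ c : G.edgeSet → Fin r × Bool, ∀ v, Set.InjOn c {e | v ∈ (e : Sym2 V)} ∧
      #(({e | v ∈ (e : Sym2 V)} : Finset G.edgeSet).image fun e => (c e).1) ≤
        (G.degree v + 1) / 2 := by
  let col : G.Coloring Bool := hbip.toColoring (by simp)
  obtain ⟨ends, hends⟩ := exists_ends_of_coloring_bool col
  have hsub (s v) : #{e | ends s e = v} ≤ #{e : G.edgeSet | v ∈ (e : Sym2 V)} :=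
    card_le_card fun e he => by
      rw [mem_filter_univ] at he ⊢
      exact ((hends s e v).1 he).1
  obtain ⟨c, hc⟩ := exists_pair_coloring ends (r := r) fun s v =>
    (hsub s v).trans (card_filter_mem_edgeSet_eq_degree v |>.trans_le (hdeg v))
  have hmem (v) (e : G.edgeSet) : v ∈ (e : Sym2 V) ↔ ends (col v) e = v := by simp [hends]
  refine ⟨c, fun v => ⟨fun e he e' he' h => ?_, ?_⟩⟩
  · exact (hc (col v)).1 (((hmem v e).1 he).trans ((hmem v e').1 he').symm) h
  · simpa only [← card_filter_mem_edgeSet_eq_degree, hmem] using (hc (col v)).2 v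

theorem isProperEdgeColoring_extend {t : ℕ} {c : G.edgeSet → ℕ} (hc : ∀ e, c e ∈ Set.Icc 1 t)
    (hinj : ∀ v, Set.InjOn c {e | v ∈ (e : Sym2 V)}) :
    IsProperEdgeColoring G t (Function.extend Subtype.val c 0) := by
  have hval (e : G.edgeSet) : Function.extend Subtype.val c 0 (e : Sym2 V) = c e :=
    Subtype.val_injective.extend_apply c 0 e
  refine ⟨fun e he => hval ⟨e, he⟩ ▸ hc _, ?_⟩
  rintro e he e' he' hne ⟨v, hv, hv'⟩ h
  rw [hval ⟨e, he⟩, hval ⟨e', he'⟩] at h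
  exact hne (congrArg Subtype.val (hinj v hv hv' h))

theorem colorsAt_extend (c : G.edgeSet → ℕ) (v : V) :
    colorsAt G (Function.extend Subtype.val c 0) v = c '' {e | v ∈ (e : Sym2 V)} := by
  have hinc : G.incidenceSet v = Subtype.val '' {e : G.edgeSet | v ∈ (e : Sym2 V)} := by
    ext e
    simp [SimpleGraph.incidenceSet, and_comm]
  rw [colorsAt, hinc, Set.image_image]
  exact Set.image_congr fun e _ => Subtype.val_injective.extend_apply c 0 e

theorem isIntervalSet_of_subset_Icc_succ {S : Set ℕ} {a : ℕ} (hS : S ⊆ Set.Icc a (a + 1)) :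
    IsIntervalSet S := by
  have hpair : S ⊆ {a, a + 1} := fun k hk => by
    have := hS hk
    simp only [Set.mem_Icc, Set.mem_insert_iff, Set.mem_singleton_iff] at this ⊢
    omega
  rcases Set.subset_pair_iff_eq.1 hpair with rfl | rfl | rfl | rfl
  · exact ⟨1, 0, by simp⟩
  · exact ⟨a, a, by simp⟩
  · exact ⟨a + 1, a + 1, by simp⟩
  · exact ⟨a, a + 1, Set.ext fun k => by
      simp only [Set.mem_Icc, Set.mem_insert_iff, Set.mem_singleton_iff]
      omega⟩

/-- The color from `{1, …, 2r}` that is the member `c.2` of the `c.1`-th of the `r` pairs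
`{1, 2}, {3, 4}, …, {2r - 1, 2r}`, the pairs being numbered from `0`. -/
def pairColor {r : ℕ} (c : Fin r × Bool) : ℕ := 2 * c.1 + c.2.toNat + 1

theorem pairColor_injective {r : ℕ} : Function.Injective (pairColor (r := r)) := by
  rintro ⟨i, b⟩ ⟨j, b'⟩ h
  have := b.toNat_le
  have := b'.toNat_le
  simp only [pairColor] at h
  obtain rfl : i = j := Fin.ext (by omega)
  exact Prod.ext rfl (by cases b <;> cases b' <;> simp_all)

theorem range_pairColor (r : ℕ) : Set.range (pairColor (r := r)) = Set.Icc 1 (2 * r) := by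
  ext k
  constructor
  · rintro ⟨⟨i, b⟩, rfl⟩
    have := b.toNat_le
    simp only [pairColor, Set.mem_Icc]
    omega
  · rintro ⟨hk, hkr⟩
    obtain ⟨m, rfl | rfl⟩ := Nat.even_or_odd' k
    · exact ⟨(⟨m - 1, by omega⟩, true), by simp only [pairColor, Bool.toNat_true]; omega⟩
    · exact ⟨(⟨m, by omega⟩, false), by simp [pairColor]⟩

theorem isIntervalSet_image_pairColor {r : ℕ} {K : Finset (Fin r × Bool)}
    (hK : #(K.image Prod.fst) ≤ 1) : IsIntervalSet (pairColor '' (K : Set (Fin r × Bool))) := by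
  rcases K.eq_empty_or_nonempty with rfl | ⟨⟨i, b⟩, hi⟩
  · exact ⟨1, 0, by simp⟩
  · refine isIntervalSet_of_subset_Icc_succ (a := 2 * i + 1) ?_
    rintro _ ⟨⟨j, b'⟩, hj, rfl⟩
    obtain rfl : j = i := card_le_one.1 hK _ (mem_image_of_mem Prod.fst hj) _
      (mem_image_of_mem Prod.fst hi)
    have := b'.toNat_le
    simp only [pairColor, Set.mem_Icc]
    omega

theorem card_image_fst_compl_le_one {ι : Type*} [Fintype ι] [DecidableEq ι]
    {K : Finset (ι × Bool)} (hK : #(K.image Prod.fst) ≤ (#K + 1) / 2)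
    (hcard : 2 * Fintype.card ι ≤ #K + 2) : #(Kᶜ.image Prod.fst) ≤ 1 := by
  by_contra! hlt
  have hcompl : #K + #Kᶜ = 2 * Fintype.card ι := by
    rw [card_add_card_compl, Fintype.card_prod, Fintype.card_bool, mul_comm]
  have hle : #(Kᶜ.image Prod.fst) ≤ #Kᶜ := card_image_le
  obtain ⟨i, hi⟩ : ∃ i, i ∉ K.image Prod.fst := by
    by_contra! hall
    rw [eq_univ_of_forall hall, card_univ] at hK
    omega
  have hsub : {i} ×ˢ univ ⊆ Kᶜ := by
    rintro ⟨j, b⟩ hj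
    obtain rfl : j = i := mem_singleton.1 (mem_product.1 hj).1
    exact mem_compl.2 fun h => hi (mem_image_of_mem Prod.fst h)
  have heq : {i} ×ˢ univ = Kᶜ := eq_of_subset_of_card_le hsub <| by
    rw [card_product, card_singleton, card_univ, Fintype.card_bool]
    omega
  rw [← heq, product_image_fst univ_nonempty, card_singleton] at hlt
  exact hlt.false

theorem isIntervalSet_or_compl {r : ℕ} {K : Finset (Fin r × Bool)}
    (hK : #(K.image Prod.fst) ≤ (#K + 1) / 2) (hcard : #K ≤ 2 ∨ 2 * r ≤ #K + 2) :
    IsIntervalSet (pairColor '' (K : Set (Fin r × Bool))) ∨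
      IsIntervalSet (Set.Icc 1 (2 * r) \ pairColor '' (K : Set (Fin r × Bool))) := by
  rcases hcard with hsmall | hlarge
  · exact .inl (isIntervalSet_image_pairColor (by omega))
  · right
    rw [← range_pairColor, ← Set.image_compl_eq_range_sdiff_image pairColor_injective, ← coe_compl]
    exact isIntervalSet_image_pairColor (card_image_fst_compl_le_one hK (by simpa using hlarge))

theorem stmt_0_general {V : Type*} [Fintype V] (G : SimpleGraph V) [DecidableRel G.Adj]
    (hbip : G.Colorable 2) (r : ℕ) (hle : ∀ v, G.degree v ≤ 2 * r)
    (hdeg : ∀ v, G.degree v ≤ 2 ∨ 2 * r ≤ G.degree v + 2) :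
    ∃ c : Sym2 V → ℕ, IsCyclicIntervalColoring G (2 * r) c := by
  classical
  obtain ⟨c, hc⟩ := exists_pair_edge_coloring hbip hle
  refine ⟨Function.extend Subtype.val (pairColor ∘ c) 0, isProperEdgeColoring_extend
    (fun e => range_pairColor r ▸ Set.mem_range_self _)
    (fun v => pairColor_injective.comp_injOn (hc v).1), fun v => ?_⟩
  have hcard : #(({e | v ∈ (e : Sym2 V)} : Finset G.edgeSet).image c) = G.degree v := by
    rw [card_image_of_injOn (by simpa using (hc v).1), card_filter_mem_edgeSet_eq_degree]
  have := isIntervalSet_or_compl (K := ({e | v ∈ (e : Sym2 V)} : Finset G.edgeSet).image c)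
    (by rw [image_image, hcard]; exact (hc v).2) (hcard ▸ hdeg v)
  rw [colorsAt_extend, Set.image_comp]
  simpa using this

end Graph

/-- a finite bipartite graph with maximum degree `2r` (`r ≥ 2`) in which every
vertex degree lies in `{1, 2, 2r-2, 2r-1, 2r}` has a cyclic interval `2r`-coloring. -/
theorem stmt_0 {V : Type*} [Fintype V] (G : SimpleGraph V) [DecidableRel G.Adj]
    (hbip : G.Colorable 2) (r : ℕ) (hr : 2 ≤ r) (hΔ : G.maxDegree = 2 * r)
    (hdeg : ∀ v : V, G.degree v ∈ ({1, 2, 2 * r - 2, 2 * r - 1, 2 * r} : Set ℕ)) :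
    ∃ c : Sym2 V → ℕ, IsCyclicIntervalColoring G (2 * r) c := by
  refine stmt_0_general G hbip r (fun v => hΔ ▸ G.degree_le_maxDegree v) fun v => ?_
  have := hdeg v
  simp only [Set.mem_insert_iff, Set.mem_singleton_iff] at this
  omega
end

section
/- Let H be a finite graph with maximum degree Δ(H) = 2r for some integer r ≥ 2, such that every vertex v of H satisfies either deg(v) ≥ 2r−2 or deg(v) ≤ 2. Then the full subdivision of H admits a cyclic interval 2r-coloring. -/
open SimpleGraph

/-- The full subdivision of `H`: the bipartite graph on `V(H) ⊕ E(H)` where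
`v : V(H)` is adjacent to `e : E(H)` iff `v` is an endpoint of `e`. -/
def fullSubdivision {V : Type*} (H : SimpleGraph V) : SimpleGraph (V ⊕ H.edgeSet) :=
  SimpleGraph.fromRel (fun x y =>
    ∃ (v : V) (e : H.edgeSet), v ∈ (e : Sym2 V) ∧ x = Sum.inl v ∧ y = Sum.inr e)

/-!
Orient `H` so that in- and out-degree differ by at most one everywhere; both are then at most `r`.
Read as a bipartite multigraph from tails to heads, `H` has by König's theorem an edge coloring with
`r` colors in which the out-edges of a vertex have distinct colors, and so do its in-edges. At a
vertex of even degree the in- and out-degree agree, and loops added there before coloring force the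
out-edges to have the same colors as the in-edges.

In the subdivision an edge of color `i` spends the color `2i + 1` on its tail half and `2i + 2` on
its head half. The two colors at a subdivision vertex are thus consecutive, and the color set at a
vertex of even degree is a union of blocks `{2i + 1, 2i + 2}`. Either the color set of a vertex of
`H` or its complement has at most two elements, so it is empty, a singleton or, the degree being
even, a single block.
-/

open scoped Finset

section Fibers

variable {E F X : Type*} [Fintype E] [Fintype F] [DecidableEq X]

lemma sum_card_fiber [Fintype X] (g : E → X) : ∑ x, #{e | g e = x} = Fintype.card E := by
  simp [Finset.sum_card_fiberwise_eq_card_filter]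

lemma surjective_of_card_fiber_pos {g : E → X} (hg : ∀ x, 0 < #{e | g e = x}) :
    g.Surjective := fun x => by
  simpa [Finset.card_pos, Finset.filter_nonempty_iff] using hg x

lemma card_filter_mem_of_card_fiber_eq {g : E → X} {r : ℕ} (hg : ∀ x, #{e | g e = x} = r)
    (W : Finset X) : #{e | g e ∈ W} = #W * r := by
  simp [← Finset.sum_card_fiberwise_eq_card_filter, hg]

lemma card_fiber_sumElim (f : E → X) (g : F → X) (x : X) :
    #{z | Sum.elim f g z = x} = #{e | f e = x} + #{e | g e = x} := by
  rw [Finset.card_filter, Finset.card_filter, Finset.card_filter, Fintype.sum_sum_type]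
  rfl

lemma card_fiber_comp_bijective (g : F → X) {f : E → F} (hf : f.Bijective) (x : X) :
    #{e | g (f e) = x} = #{z | g z = x} := by
  simp only [Finset.card_filter]
  exact hf.sum_comp fun z => if g z = x then 1 else 0

lemma card_fiber_injective_comp {Y : Type*} [DecidableEq Y] {f : X → Y} (hf : f.Injective)
    (g : E → X) (x : X) : #{e | (f ∘ g) e = f x} = #{e | g e = x} := by
  simp only [Function.comp_apply, hf.eq_iff]

lemma card_fiber_sigma_fst [Fintype X] (d : X → ℕ) (x : X) :
    #{z : Σ x, Fin (d x) | z.1 = x} = d x := by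
  rw [Finset.card_filter, Fintype.sum_sigma, Finset.sum_eq_single x] <;> simp +contextual

lemma card_fiber_compl_of_bijOn {g : E → X} {r : ℕ} (hg : ∀ x, #{e | g e = x} = r + 1)
    {M : Set E} [DecidablePred (· ∈ M)] (hM : Set.BijOn g M Set.univ) (x : X) :
    #{e : ↥Mᶜ | g e = x} = r := by
  classical
  obtain ⟨m, hm, rfl⟩ := hM.surjOn (Set.mem_univ x)
  have hfiber : ({e : ↥Mᶜ | g e = g m} : Finset ↥Mᶜ).map (Function.Embedding.subtype _) =
      ({e | g e = g m} : Finset E).erase m := by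
    ext e
    have : e ∈ M → g e = g m → e = m := fun he h => hM.injOn he hm h
    simp only [Finset.mem_map, Finset.mem_filter, Finset.mem_univ, true_and,
      Function.Embedding.subtype_apply, Subtype.exists, Set.mem_compl_iff, exists_and_left,
      exists_prop, exists_eq_right_right, Finset.mem_erase, ne_eq]
    grind
  rw [← Finset.card_map, hfiber, Finset.card_erase_of_mem (by simp), hg, Nat.add_sub_cancel]

lemma exists_eq_and_eq_of_card_fiber_eq {g : E → X} {r : ℕ} {c : E → Fin r}
    (hc : Function.Injective fun e => (g e, c e)) {x : X} (hx : #{e | g e = x} = r) (i : Fin r) :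
    ∃ e, g e = x ∧ c e = i := by
  have hinj : Set.InjOn c ({e | g e = x} : Finset E) := by
    intro e he e' he' h
    simp only [Finset.coe_filter, Finset.mem_univ, true_and, Set.mem_ofPred_eq] at he he'
    exact hc (Prod.ext (he.trans he'.symm) h)
  have himage : ({e | g e = x} : Finset E).image c = Finset.univ :=
    Finset.eq_univ_of_card _ (by rw [Finset.card_image_of_injOn hinj, hx, Fintype.card_fin])
  have hi : i ∈ ({e | g e = x} : Finset E).image c := himage ▸ Finset.mem_univ i
  simpa using hi

end Fibers

section EdgeColoring

lemma injective_prodMk_extend_last {E X : Type*} {g : E → X} {r : ℕ} {M : Set E}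
    [DecidablePred (· ∈ M)] (hM : Set.InjOn g M) {c : ↥Mᶜ → Fin r}
    (hc : Function.Injective fun e : ↥Mᶜ => (g e, c e)) :
    Function.Injective fun e =>
      (g e, if h : e ∈ M then Fin.last r else (c ⟨e, h⟩).castSucc) := by
  intro e e' h
  obtain ⟨hg, hcol⟩ := Prod.mk.inj h
  by_cases he : e ∈ M <;> by_cases he' : e' ∈ M <;>
    simp only [he, he', dite_true, dite_false] at hcol
  · exact hM he he' hg
  · exact absurd hcol.symm (Fin.castSucc_lt_last _).ne
  · exact absurd hcol (Fin.castSucc_lt_last _).ne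
  · exact congrArg Subtype.val (@hc ⟨e, he⟩ ⟨e', he'⟩ (Prod.ext hg (Fin.castSucc_injective r hcol)))

variable {E X Y V : Type*} [Fintype E] [DecidableEq X] [DecidableEq Y] [DecidableEq V]

lemma exists_bijOn_bijOn_of_card_fiber_eq {s : E → X} {t : E → Y} {r : ℕ} (hr : 0 < r)
    (hs : ∀ x, #{e | s e = x} = r) (ht : ∀ y, #{e | t e = y} = r) :
    ∃ M : Set E, Set.BijOn s M Set.univ ∧ Set.BijOn t M Set.univ := by
  have : Fintype X := .ofSurjective s (surjective_of_card_fiber_pos fun x => hs x ▸ hr)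
  have : Fintype Y := .ofSurjective t (surjective_of_card_fiber_pos fun y => ht y ▸ hr)
  obtain ⟨f, hf, hfm⟩ := (Finset.all_card_le_biUnion_card_iff_exists_injective
    fun x => ({e | s e = x} : Finset E).image t).1 fun W => by
      set N := W.biUnion fun x => ({e | s e = x} : Finset E).image t with hN
      have hsub : ({e | s e ∈ W} : Finset E) ⊆ ({e | t e ∈ N} : Finset E) := by
        intro e he
        simp only [Finset.mem_filter, Finset.mem_univ, true_and] at he
        simpa [hN] using ⟨e, he, rfl⟩
      have hcard := Finset.card_le_card hsub
      rw [card_filter_mem_of_card_fiber_eq hs, card_filter_mem_of_card_fiber_eq ht] at hcard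
      exact Nat.le_of_mul_le_mul_right hcard hr
  have hXY : Fintype.card X = Fintype.card Y := by
    have hX := sum_card_fiber s
    have hY := sum_card_fiber t
    simp only [hs, ht, Finset.sum_const, Finset.card_univ, smul_eq_mul] at hX hY
    exact Nat.eq_of_mul_eq_mul_right hr (hX.trans hY.symm)
  have hfbij : f.Bijective := (Fintype.bijective_iff_injective_and_card f).2 ⟨hf, hXY⟩
  have hm : ∀ x, ∃ e, s e = x ∧ t e = f x := fun x => by simpa using hfm x
  choose m hsm htm using hm
  refine ⟨Set.range m, ⟨Set.mapsTo_univ _ _, ?_, fun x _ => ⟨m x, ⟨x, rfl⟩, hsm x⟩⟩,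
    ⟨Set.mapsTo_univ _ _, ?_, fun y _ => ?_⟩⟩
  · rintro _ ⟨x, rfl⟩ _ ⟨x', rfl⟩ h
    rw [hsm, hsm] at h
    rw [h]
  · rintro _ ⟨x, rfl⟩ _ ⟨x', rfl⟩ h
    rw [htm, htm] at h
    rw [hf h]
  · obtain ⟨x, rfl⟩ := hfbij.surjective y
    exact ⟨m x, ⟨x, rfl⟩, htm x⟩

theorem exists_edgeColoring_of_card_fiber_eq {s : E → X} {t : E → Y} {r : ℕ}
    (hs : ∀ x, #{e | s e = x} = r) (ht : ∀ y, #{e | t e = y} = r) :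
    ∃ c : E → Fin r, (Function.Injective fun e => (s e, c e)) ∧
      Function.Injective fun e => (t e, c e) := by
  classical
  induction r generalizing E with
  | zero =>
    have : IsEmpty E := ⟨fun e =>
      Finset.filter_eq_empty_iff.1 (Finset.card_eq_zero.1 (hs (s e))) (Finset.mem_univ e) rfl⟩
    exact ⟨isEmptyElim, Function.injective_of_subsingleton _, Function.injective_of_subsingleton _⟩
  | succ r ih =>
    obtain ⟨M, hMs, hMt⟩ := exists_bijOn_bijOn_of_card_fiber_eq r.succ_pos hs ht
    obtain ⟨c, hcs, hct⟩ := ih (E := ↥Mᶜ) (s := fun e => s e) (t := fun e => t e)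
      (card_fiber_compl_of_bijOn hs hMs) (card_fiber_compl_of_bijOn ht hMt)
    exact ⟨_, injective_prodMk_extend_last hMs.injOn hcs,
      injective_prodMk_extend_last hMt.injOn hct⟩

theorem exists_edgeColoring_of_card_fiber_le [Finite V] {s t : E → V} {r : ℕ}
    (hs : ∀ v, #{e | s e = v} ≤ r) (ht : ∀ v, #{e | t e = v} ≤ r) :
    ∃ c : E → Fin r, (Function.Injective fun e => (s e, c e)) ∧
      Function.Injective fun e => (t e, c e) := by
  cases nonempty_fintype V
  have hcard : ∀ {g : E → V}, (∀ v, #{e | g e = v} ≤ r) →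
      Fintype.card (Σ v, Fin (r - #{e | g e = v})) + Fintype.card E = Fintype.card V * r := by
    intro g hg
    rw [← sum_card_fiber g, Fintype.card_sigma, ← Finset.sum_add_distrib]
    simp [Nat.sub_add_cancel (hg _)]
  -- Each missing out-edge is matched with a missing in-edge, which makes the multigraph regular.
  let p : (Σ v, Fin (r - #{e | s e = v})) ≃ Σ v, Fin (r - #{e | t e = v}) :=
    Fintype.equivOfCardEq (Nat.add_right_cancel ((hcard hs).trans (hcard ht).symm))
  obtain ⟨c, hcs, hct⟩ := exists_edgeColoring_of_card_fiber_eq (r := r)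
    (s := Sum.elim s Sigma.fst) (t := Sum.elim t fun x => (p x).1)
    (fun v => by rw [card_fiber_sumElim, card_fiber_sigma_fst, Nat.add_sub_cancel' (hs v)])
    (fun v => by
      rw [card_fiber_sumElim, card_fiber_comp_bijective Sigma.fst p.bijective,
        card_fiber_sigma_fst, Nat.add_sub_cancel' (ht v)])
  exact ⟨c ∘ Sum.inl, hcs.comp Sum.inl_injective, hct.comp Sum.inl_injective⟩

lemma exists_inl_iff_not_exists_inr {L : Type*} [Fintype L] {s : E → V} {p : L → V} {r : ℕ}
    {c : E ⊕ L → Fin r} (hc : Function.Injective fun z => (Sum.elim s p z, c z)) {v : V}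
    (hv : #{e | s e = v} + #{l | p l = v} = r) (i : Fin r) :
    (∃ e, s e = v ∧ c (.inl e) = i) ↔ ¬ ∃ l, p l = v ∧ c (.inr l) = i := by
  constructor
  · rintro ⟨e, rfl, rfl⟩ ⟨l, hl, hcl⟩
    exact Sum.inr_ne_inl (hc (Prod.ext hl hcl))
  · intro h
    obtain ⟨e | l, hv, hi⟩ :=
      exists_eq_and_eq_of_card_fiber_eq hc ((card_fiber_sumElim s p v).trans hv) i
    · exact ⟨e, hv, hi⟩
    · exact absurd ⟨l, hv, hi⟩ h

theorem exists_edgeColoring_image_eq [Finite V] {s t : E → V} {r : ℕ}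
    (hs : ∀ v, #{e | s e = v} ≤ r) (ht : ∀ v, #{e | t e = v} ≤ r) :
    ∃ c : E → Fin r, (Function.Injective fun e => (s e, c e)) ∧
      (Function.Injective fun e => (t e, c e)) ∧
      ∀ v, #{e | s e = v} = #{e | t e = v} → c '' {e | s e = v} = c '' {e | t e = v} := by
  cases nonempty_fintype V
  -- With loops filling up the balanced vertices, the colors missing on the out-edges and those
  -- missing on the in-edges are both the colors of the loops.
  let d v := r - max #{e | s e = v} #{e | t e = v}
  obtain ⟨c, hcs, hct⟩ := exists_edgeColoring_of_card_fiber_le (r := r)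
    (s := Sum.elim s (Sigma.fst : (Σ v, Fin (d v)) → V)) (t := Sum.elim t Sigma.fst)
    (fun v => by rw [card_fiber_sumElim, card_fiber_sigma_fst]; have := hs v; grind)
    (fun v => by rw [card_fiber_sumElim, card_fiber_sigma_fst]; have := ht v; grind)
  refine ⟨c ∘ Sum.inl, hcs.comp Sum.inl_injective, hct.comp Sum.inl_injective, fun v hv => ?_⟩
  ext i
  have hs' := exists_inl_iff_not_exists_inr hcs (v := v)
    (by rw [card_fiber_sigma_fst]; have := hs v; grind) i
  have ht' := exists_inl_iff_not_exists_inr hct (v := v)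
    (by rw [card_fiber_sigma_fst]; have := ht v; grind) i
  exact hs'.trans ht'.symm

end EdgeColoring

section Orientation

variable {E V : Type*} [Fintype E] [DecidableEq V]

/-- The degree of `v` in the multigraph with edge set `E` whose edge `e` joins `a e` to `b e`;
a loop at `v` counts twice. -/
def endpointDegree (a b : E → V) (v : V) : ℕ :=
  #{e | a e = v} + #{e | b e = v}

lemma endpointDegree_congr {a b s t : E → V} (h : ∀ e, s(s e, t e) = s(a e, b e)) (v : V) :
    endpointDegree s t v = endpointDegree a b v := by
  simp only [endpointDegree, Finset.card_filter, ← Finset.sum_add_distrib]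
  refine Finset.sum_congr rfl fun e _ => ?_
  obtain ⟨hs, ht⟩ | ⟨hs, ht⟩ := Sym2.eq_iff.1 (h e)
  · rw [hs, ht]
  · rw [hs, ht, add_comm]

lemma endpointDegree_eq_ncard {a b : E → V} (hne : ∀ e, a e ≠ b e) (v : V) :
    endpointDegree a b v = {e | v ∈ s(a e, b e)}.ncard := by
  have hdisj : Disjoint ({e | a e = v} : Finset E) ({e | b e = v} : Finset E) :=
    Finset.disjoint_filter.2 fun e _ ha hb => hne e (ha.trans hb.symm)
  classical
  rw [endpointDegree, ← Finset.card_union_of_disjoint hdisj, ← Set.ncard_coe_finset]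
  congr 1
  ext e
  simp [eq_comm]

lemma sum_endpointDegree [Fintype V] (a b : E → V) :
    ∑ v, endpointDegree a b v = 2 * Fintype.card E := by
  simp only [endpointDegree, Finset.sum_add_distrib, sum_card_fiber, two_mul]

lemma endpointDegree_sumElim {F : Type*} [Fintype F] (a b : E → V) (a' b' : F → V) (v : V) :
    endpointDegree (Sum.elim a a') (Sum.elim b b') v =
      endpointDegree a b v + endpointDegree a' b' v := by
  simp only [endpointDegree, card_fiber_sumElim]
  omega

lemma two_mul_card_le_sum_endpointDegree (a b : E → V) (A : Finset E) :
    2 * #A ≤ ∑ v ∈ A.image a ∪ A.image b, endpointDegree a b v := by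
  have hcard : ∀ g : E → V, (∀ e ∈ A, g e ∈ A.image a ∪ A.image b) →
      #A ≤ ∑ v ∈ A.image a ∪ A.image b, #{e | g e = v} := by
    intro g hg
    rw [Finset.sum_card_fiberwise_eq_card_filter]
    exact Finset.card_le_card fun e he => Finset.mem_filter.2 ⟨Finset.mem_univ e, hg e he⟩
  simp only [endpointDegree, Finset.sum_add_distrib, two_mul]
  exact add_le_add
    (hcard a fun e he => Finset.mem_union_left _ (Finset.mem_image_of_mem a he))
    (hcard b fun e he => Finset.mem_union_right _ (Finset.mem_image_of_mem b he))

-- Hall's theorem assigns to the edges distinct slots at one of their endpoints, where `v` offers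
-- half its degree many slots; by counting every slot is used, and the slots mark the tails.
theorem exists_eulerian_orientation [Finite V] {a b : E → V}
    (h : ∀ v, Even (endpointDegree a b v)) :
    ∃ s t : E → V, (∀ e, s(s e, t e) = s(a e, b e)) ∧ ∀ v, #{e | s e = v} = #{e | t e = v} := by
  cases nonempty_fintype V
  choose d hd using fun v => (even_iff_exists_two_mul.1 (h v))
  obtain ⟨f, hf, hfm⟩ := (Finset.all_card_le_biUnion_card_iff_exists_injective
    fun e => ({a e, b e} : Finset V).sigma fun v => (Finset.univ : Finset (Fin (d v)))).1
    fun A => by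
      have hslots : (A.image a ∪ A.image b).sigma (fun v => (Finset.univ : Finset (Fin (d v)))) ⊆
          A.biUnion fun e => ({a e, b e} : Finset V).sigma fun _ => Finset.univ := by
        rintro ⟨v, i⟩ hv
        simp only [Finset.mem_sigma, Finset.mem_union, Finset.mem_image, Finset.mem_univ,
          and_true, Finset.mem_biUnion, Finset.mem_insert, Finset.mem_singleton] at hv ⊢
        grind
      refine le_trans ?_ (Finset.card_le_card hslots)
      have hA := two_mul_card_le_sum_endpointDegree a b A
      simp only [hd, ← Finset.mul_sum] at hA
      simpa using hA
  have hcard : Fintype.card E = Fintype.card (Σ v, Fin (d v)) := by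
    have hE := sum_endpointDegree a b
    simp only [hd, ← Finset.mul_sum] at hE
    rw [Fintype.card_sigma]
    simpa using hE.symm
  have hbij : f.Bijective := (Fintype.bijective_iff_injective_and_card f).2 ⟨hf, hcard⟩
  have htail : ∀ e, (f e).1 ∈ s(a e, b e) := fun e => by simpa using hfm e
  choose t ht using htail
  refine ⟨fun e => (f e).1, t, fun e => (ht e).symm, fun v => ?_⟩
  have hdeg := (endpointDegree_congr (fun e => (ht e).symm) v).trans (hd v)
  rw [endpointDegree, card_fiber_comp_bijective Sigma.fst hbij, card_fiber_sigma_fst] at hdeg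
  rw [card_fiber_comp_bijective Sigma.fst hbij, card_fiber_sigma_fst]
  omega

lemma even_card_odd_endpointDegree [Fintype V] (a b : E → V) :
    Even (Fintype.card {v // Odd (endpointDegree a b v)}) := by
  rw [Fintype.card_subtype, ← Finset.even_sum_iff_even_card_odd, sum_endpointDegree]
  exact even_two_mul _

section Star

variable (p : V → Prop) [Fintype {v // p v}]

lemma endpointDegree_star_some [DecidablePred p] (v : V) :
    endpointDegree (fun x : {v // p v} => some x.1) (fun _ => none) (some v) =
      if p v then 1 else 0 := by
  simp only [endpointDegree, Option.some.injEq, reduceCtorEq, Finset.filter_false,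
    Finset.card_empty, add_zero]
  split_ifs with hv
  · refine Finset.card_eq_one.2 ⟨⟨v, hv⟩, ?_⟩
    ext x
    simp [Subtype.ext_iff]
  · refine Finset.card_eq_zero.2 (Finset.filter_eq_empty_iff.2 ?_)
    rintro x - rfl
    exact hv x.2

lemma endpointDegree_star_none :
    endpointDegree (fun x : {v // p v} => some x.1) (fun _ => none) none =
      Fintype.card {v // p v} := by
  simp [endpointDegree]

end Star

lemma even_endpointDegree_join_star [Fintype V] (a b : E → V) (v : Option V) :
    Even (endpointDegree
      (Sum.elim (some ∘ a) fun x : {v // Odd (endpointDegree a b v)} => some x.1)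
      (Sum.elim (some ∘ b) fun _ => none) v) := by
  rw [endpointDegree_sumElim]
  cases v with
  | none =>
    rw [endpointDegree_star_none]
    simpa [endpointDegree.eq_def (some ∘ a)] using even_card_odd_endpointDegree a b
  | some v =>
    have hab : endpointDegree (some ∘ a) (some ∘ b) (some v) = endpointDegree a b v := by
      simp only [endpointDegree, card_fiber_injective_comp (Option.some_injective V)]
    rw [hab, endpointDegree_star_some]
    split_ifs with hv
    · exact hv.add_one
    · simpa using hv

-- Joining the vertices of odd degree to a new vertex makes all degrees even.
theorem exists_balanced_orientation [Finite V] (a b : E → V) :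
    ∃ s t : E → V, (∀ e, s(s e, t e) = s(a e, b e)) ∧
      ∀ v, #{e | s e = v} ≤ #{e | t e = v} + 1 ∧ #{e | t e = v} ≤ #{e | s e = v} + 1 := by
  cases nonempty_fintype V
  obtain ⟨s', t', hends, hbal⟩ :=
    exists_eulerian_orientation (even_endpointDegree_join_star a b)
  have hinl : ∀ e, ∃ x y, s' (.inl e) = some x ∧ t' (.inl e) = some y ∧ s(x, y) = s(a e, b e) := by
    intro e
    obtain ⟨hs, ht⟩ | ⟨hs, ht⟩ := Sym2.eq_iff.1 (hends (.inl e))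
    · exact ⟨a e, b e, hs, ht, rfl⟩
    · exact ⟨b e, a e, hs, ht, Sym2.eq_swap⟩
  choose s t hs ht hst using hinl
  have hs' : s' = Sum.elim (some ∘ s) (s' ∘ .inr) := by
    ext1 (e | x) <;> simp [hs]
  have ht' : t' = Sum.elim (some ∘ t) (t' ∘ .inr) := by
    ext1 (e | x) <;> simp [ht]
  refine ⟨s, t, hst, fun v => ?_⟩
  have hstar : endpointDegree (s' ∘ .inr) (t' ∘ .inr) (some v) ≤ 1 := by
    rw [endpointDegree_congr (s := s' ∘ .inr) (t := t' ∘ .inr) fun x => hends (.inr x)]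
    simp only [Sum.elim_inr, endpointDegree_star_some]
    split_ifs <;> omega
  have hv := hbal (some v)
  rw [hs', ht', card_fiber_sumElim, card_fiber_sumElim,
    card_fiber_injective_comp (Option.some_injective V),
    card_fiber_injective_comp (Option.some_injective V)] at hv
  rw [endpointDegree] at hstar
  omega

theorem exists_orientation_edgeColoring [Finite V] {a b : E → V} {r : ℕ}
    (hdeg : ∀ v, endpointDegree a b v ≤ 2 * r) :
    ∃ (s t : E → V) (c : E → Fin r), (∀ e, s(s e, t e) = s(a e, b e)) ∧
      (Function.Injective fun e => (s e, c e)) ∧ (Function.Injective fun e => (t e, c e)) ∧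
      ∀ v, Even (endpointDegree a b v) → c '' {e | s e = v} = c '' {e | t e = v} := by
  obtain ⟨s, t, hends, hbal⟩ := exists_balanced_orientation a b
  have hst : ∀ v, #{e | s e = v} + #{e | t e = v} = endpointDegree a b v :=
    endpointDegree_congr hends
  obtain ⟨c, hcs, hct, himage⟩ := exists_edgeColoring_image_eq (s := s) (t := t) (r := r)
    (fun v => by have := hst v; have := hbal v; have := hdeg v; omega)
    (fun v => by have := hst v; have := hbal v; have := hdeg v; omega)
  refine ⟨s, t, c, hends, hcs, hct, fun v hv => himage v ?_⟩
  obtain ⟨k, hk⟩ := hv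
  have := hst v
  have := hbal v
  omega

end Orientation

section Intervals

/-- A set of positive integers that is a union of blocks `{2i + 1, 2i + 2}`. -/
def IsPaired (S : Set ℕ) : Prop :=
  0 ∉ S ∧ ∀ i, 2 * i + 1 ∈ S ↔ 2 * i + 2 ∈ S

lemma isPaired_Icc_one_two_mul (r : ℕ) : IsPaired (Set.Icc 1 (2 * r)) :=
  ⟨by simp, fun i => by simp only [Set.mem_Icc]; omega⟩

lemma IsPaired.sdiff {S T : Set ℕ} (hS : IsPaired S) (hT : IsPaired T) : IsPaired (S \ T) :=
  ⟨fun h => hS.1 h.1, fun i => and_congr (hS.2 i) (not_congr (hT.2 i))⟩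

lemma IsPaired.exists_pair_subset {S : Set ℕ} (hS : IsPaired S) (hne : S.Nonempty) :
    ∃ i, {2 * i + 1, 2 * i + 2} ⊆ S := by
  obtain ⟨n, hn⟩ := hne
  have hn0 : n ≠ 0 := fun h => hS.1 (h ▸ hn)
  rcases Nat.even_or_odd' (n - 1) with ⟨i, hi | hi⟩
  · obtain rfl : n = 2 * i + 1 := by omega
    exact ⟨i, Set.pair_subset hn ((hS.2 i).1 hn)⟩
  · obtain rfl : n = 2 * i + 2 := by omega
    exact ⟨i, Set.pair_subset ((hS.2 i).2 hn) hn⟩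

lemma isIntervalSet_pair (n : ℕ) : IsIntervalSet {n, n + 1} :=
  ⟨n, n + 1, by ext; simp only [Set.mem_insert_iff, Set.mem_singleton_iff, Set.mem_Icc]; omega⟩

lemma IsPaired.isIntervalSet {S : Set ℕ} (hS : IsPaired S) (hcard : S.ncard = 2) :
    IsIntervalSet S := by
  obtain ⟨i, hi⟩ := hS.exists_pair_subset (Set.nonempty_of_ncard_ne_zero (by omega))
  have hpair : ({2 * i + 1, 2 * i + 2} : Set ℕ).ncard = 2 := Set.ncard_pair (by omega)
  rw [← Set.eq_of_subset_of_ncard_le hi (by rw [hcard, hpair])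
    (Set.finite_of_ncard_ne_zero (by omega))]
  exact isIntervalSet_pair (2 * i + 1)

lemma isIntervalSet_of_ncard_le_two {S : Set ℕ} (hfin : S.Finite) (hcard : S.ncard ≤ 2)
    (hS : Even S.ncard → IsPaired S) : IsIntervalSet S := by
  obtain h | h | h : S.ncard = 0 ∨ S.ncard = 1 ∨ S.ncard = 2 := by omega
  · obtain rfl := (Set.ncard_eq_zero hfin).1 h
    exact ⟨1, 0, by simp⟩
  · obtain ⟨n, rfl⟩ := Set.ncard_eq_one.1 h
    exact ⟨n, n, by simp⟩
  · exact (hS (h ▸ even_two)).isIntervalSet h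

lemma isIntervalSet_or_isIntervalSet_sdiff {r : ℕ} {S : Set ℕ} (hsub : S ⊆ Set.Icc 1 (2 * r))
    (hcard : 2 * r - 2 ≤ S.ncard ∨ S.ncard ≤ 2) (hS : Even S.ncard → IsPaired S) :
    IsIntervalSet S ∨ IsIntervalSet (Set.Icc 1 (2 * r) \ S) := by
  have hfin : S.Finite := (Set.finite_Icc _ _).subset hsub
  have hdiff : (Set.Icc 1 (2 * r) \ S).ncard + S.ncard = 2 * r := by
    rw [Set.ncard_sdiff_add_ncard_of_subset hsub (Set.finite_Icc _ _), ← Nat.card_coe_set_eq]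
    simp
  refine hcard.symm.imp (fun h => isIntervalSet_of_ncard_le_two hfin h hS) fun h => ?_
  refine isIntervalSet_of_ncard_le_two (Set.finite_Icc _ _).sdiff (by omega) fun heven => ?_
  have hSeven : Even S.ncard := by
    have hr := even_two_mul r
    rw [← hdiff, Nat.even_add] at hr
    exact hr.1 heven
  exact (isPaired_Icc_one_two_mul r).sdiff (hS hSeven)

end Intervals

section HalfEdges

variable {E V : Type*} [DecidableEq V] {r : ℕ} {s t : E → V} {c : E → Fin r}

/-- The color of the half-edge of `e` at `v`, where `e` has tail `s e` and color `c e`: an edge of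
color `i : Fin r` spends the colors `2i + 1` and `2i + 2` on its tail and on its head. The value at
a `v` that is not an endpoint of `e` is irrelevant. -/
def halfEdgeColor (s : E → V) (c : E → Fin r) (v : V) (e : E) : ℕ :=
  if v = s e then 2 * c e + 1 else 2 * c e + 2

lemma halfEdgeColor_mem_Icc (v : V) (e : E) : halfEdgeColor s c v e ∈ Set.Icc 1 (2 * r) := by
  have := (c e).isLt
  unfold halfEdgeColor
  split_ifs <;> exact ⟨by omega, by omega⟩

lemma halfEdgeColor_eq_odd_iff {v : V} {e : E} {i : ℕ} :
    halfEdgeColor s c v e = 2 * i + 1 ↔ s e = v ∧ c e = i := by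
  unfold halfEdgeColor
  split_ifs with h <;> grind

lemma halfEdgeColor_eq_even_iff {v : V} {e : E} {i : ℕ} (hne : s e ≠ t e) (hv : v ∈ s(s e, t e)) :
    halfEdgeColor s c v e = 2 * i + 2 ↔ t e = v ∧ c e = i := by
  rw [Sym2.mem_iff] at hv
  unfold halfEdgeColor
  split_ifs with h <;> grind

lemma image_halfEdgeColor_endpoints (hne : ∀ e, s e ≠ t e) (e : E) :
    (halfEdgeColor s c · e) '' {v | v ∈ s(s e, t e)} = {2 * (c e : ℕ) + 1, 2 * (c e : ℕ) + 2} := by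
  have hends : {v | v ∈ s(s e, t e)} = {s e, t e} := by ext; simp
  rw [hends, Set.image_pair, halfEdgeColor_eq_odd_iff.2 ⟨rfl, rfl⟩,
    (halfEdgeColor_eq_even_iff (hne e) (Sym2.mem_mk_right _ _)).2 ⟨rfl, rfl⟩]

lemma injOn_halfEdgeColor_endpoints (e : E) :
    Set.InjOn (halfEdgeColor s c · e) {v | v ∈ s(s e, t e)} := by
  intro v hv w hw h
  simp only [Set.mem_ofPred_eq, Sym2.mem_iff, halfEdgeColor] at hv hw h
  grind

lemma injOn_halfEdgeColor_incident (hcs : Function.Injective fun e => (s e, c e))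
    (hct : Function.Injective fun e => (t e, c e)) (v : V) :
    Set.InjOn (halfEdgeColor s c v) {e | v ∈ s(s e, t e)} := by
  intro e he e' he' h
  simp only [Set.mem_ofPred_eq, Sym2.mem_iff, halfEdgeColor] at he he' h
  split_ifs at h with hs hs' hs'
  · have hc : c e = c e' := Fin.ext (by omega)
    exact hcs (Prod.ext (hs.symm.trans hs') hc)
  · omega
  · omega
  · have hc : c e = c e' := Fin.ext (by omega)
    exact hct (Prod.ext ((he.resolve_left hs).symm.trans (he'.resolve_left hs')) hc)

lemma odd_mem_image_halfEdgeColor_iff {v : V} {i : ℕ} :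
    2 * i + 1 ∈ halfEdgeColor s c v '' {e | v ∈ s(s e, t e)} ↔
      ∃ j ∈ c '' {e | s e = v}, (j : ℕ) = i := by
  simp only [Set.mem_image, Set.mem_ofPred_eq, halfEdgeColor_eq_odd_iff, Sym2.mem_iff]
  grind

lemma even_mem_image_halfEdgeColor_iff (hne : ∀ e, s e ≠ t e) {v : V} {i : ℕ} :
    2 * i + 2 ∈ halfEdgeColor s c v '' {e | v ∈ s(s e, t e)} ↔
      ∃ j ∈ c '' {e | t e = v}, (j : ℕ) = i := by
  have hcongr : ∀ e, v ∈ s(s e, t e) ∧ halfEdgeColor s c v e = 2 * i + 2 ↔ t e = v ∧ c e = i :=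
    fun e => ⟨fun h => (halfEdgeColor_eq_even_iff (hne e) h.1).1 h.2, fun h =>
      have hv := h.1 ▸ Sym2.mem_mk_right (s e) (t e)
      ⟨hv, (halfEdgeColor_eq_even_iff (hne e) hv).2 h⟩⟩
  simp only [Set.mem_image, Set.mem_ofPred_eq, hcongr]
  grind

lemma isPaired_image_halfEdgeColor (hne : ∀ e, s e ≠ t e) {v : V}
    (hv : c '' {e | s e = v} = c '' {e | t e = v}) :
    IsPaired (halfEdgeColor s c v '' {e | v ∈ s(s e, t e)}) := by
  refine ⟨?_, fun i => ?_⟩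
  · rintro ⟨e, -, he⟩
    exact absurd he (Nat.one_le_iff_ne_zero.1 (halfEdgeColor_mem_Icc v e).1)
  · rw [odd_mem_image_halfEdgeColor_iff, even_mem_image_halfEdgeColor_iff hne, hv]

end HalfEdges

section Subdivision

variable {V : Type*} {H : SimpleGraph V}

/-- The edge coloring of the full subdivision given by a coloring of the half-edges `(v, e)`, the
edge joining `v` to `e` being identified with the half-edge of `e` at `v`. Pairs of vertices on the
same side of the bipartition get the junk value `0`. -/
def subdivisionColoring {E : Type*} (col : V → E → ℕ) : Sym2 (V ⊕ E) → ℕ :=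
  Sym2.lift ⟨fun
    | .inl v, .inr e => col v e
    | .inr e, .inl v => col v e
    | _, _ => 0, by rintro (_ | _) (_ | _) <;> rfl⟩

@[simp]
lemma subdivisionColoring_mk {E : Type*} (col : V → E → ℕ) (v : V) (e : E) :
    subdivisionColoring col s(.inl v, .inr e) = col v e :=
  rfl

lemma mem_edgeSet_fullSubdivision_iff {z : Sym2 (V ⊕ H.edgeSet)} :
    z ∈ (fullSubdivision H).edgeSet ↔
      ∃ (v : V) (e : H.edgeSet), v ∈ (e : Sym2 V) ∧ z = s(.inl v, .inr e) := by
  induction z with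
  | _ x y =>
    rw [mem_edgeSet, fullSubdivision, fromRel_adj]
    constructor
    · rintro ⟨_, ⟨v, e, h, rfl, rfl⟩ | ⟨v, e, h, rfl, rfl⟩⟩
      · exact ⟨v, e, h, rfl⟩
      · exact ⟨v, e, h, Sym2.eq_swap⟩
    · rintro ⟨v, e, h, hz⟩
      obtain ⟨rfl, rfl⟩ | ⟨rfl, rfl⟩ := Sym2.eq_iff.1 hz
      · exact ⟨by simp, .inl ⟨v, e, h, rfl, rfl⟩⟩
      · exact ⟨by simp, .inr ⟨v, e, h, rfl, rfl⟩⟩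

lemma colorsAt_fullSubdivision_inl (col : V → H.edgeSet → ℕ) (v : V) :
    colorsAt (fullSubdivision H) (subdivisionColoring col) (.inl v) =
      col v '' {e | v ∈ (e : Sym2 V)} := by
  ext n
  simp only [colorsAt, Set.mem_image, incidenceSet, Set.mem_ofPred_eq,
    mem_edgeSet_fullSubdivision_iff]
  constructor
  · rintro ⟨_, ⟨⟨w, e, hw, rfl⟩, hv⟩, rfl⟩
    obtain rfl : v = w := by simpa using hv
    exact ⟨e, hw, rfl⟩
  · rintro ⟨e, he, rfl⟩
    exact ⟨s(.inl v, .inr e), ⟨⟨v, e, he, rfl⟩, Sym2.mem_mk_left _ _⟩, rfl⟩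

lemma colorsAt_fullSubdivision_inr (col : V → H.edgeSet → ℕ) (e : H.edgeSet) :
    colorsAt (fullSubdivision H) (subdivisionColoring col) (.inr e) =
      (col · e) '' {v | v ∈ (e : Sym2 V)} := by
  ext n
  simp only [colorsAt, Set.mem_image, incidenceSet, Set.mem_ofPred_eq,
    mem_edgeSet_fullSubdivision_iff]
  constructor
  · rintro ⟨_, ⟨⟨v, e', hv, rfl⟩, he⟩, rfl⟩
    obtain rfl : e = e' := by simpa using he
    exact ⟨v, hv, rfl⟩
  · rintro ⟨v, hv, rfl⟩
    exact ⟨s(.inl v, .inr e), ⟨⟨v, e, hv, rfl⟩, Sym2.mem_mk_right _ _⟩, rfl⟩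

lemma isProperEdgeColoring_subdivisionColoring {t : ℕ} {col : V → H.edgeSet → ℕ}
    (hrange : ∀ v (e : H.edgeSet), v ∈ (e : Sym2 V) → col v e ∈ Set.Icc 1 t)
    (hvertex : ∀ v, Set.InjOn (col v) {e | v ∈ (e : Sym2 V)})
    (hedge : ∀ e : H.edgeSet, Set.InjOn (col · e) {v | v ∈ (e : Sym2 V)}) :
    IsProperEdgeColoring (fullSubdivision H) t (subdivisionColoring col) := by
  constructor
  · intro z hz
    obtain ⟨v, e, hv, rfl⟩ := mem_edgeSet_fullSubdivision_iff.1 hz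
    exact hrange v e hv
  · rintro z hz z' hz' hne ⟨x, hx, hx'⟩ hcol
    obtain ⟨v, e, hv, rfl⟩ := mem_edgeSet_fullSubdivision_iff.1 hz
    obtain ⟨v', e', hv', rfl⟩ := mem_edgeSet_fullSubdivision_iff.1 hz'
    rw [subdivisionColoring_mk, subdivisionColoring_mk] at hcol
    obtain rfl | rfl := Sym2.mem_iff.1 hx
    · obtain rfl : v = v' := by simpa using hx'
      exact hne (by rw [hvertex v hv hv' hcol])
    · obtain rfl : e = e' := by simpa using hx'
      exact hne (by rw [hedge e hv hv' hcol])

end Subdivision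

section CyclicInterval

variable {V : Type*} [Fintype V] (H : SimpleGraph V) [DecidableRel H.Adj]

lemma ncard_incident_edges (v : V) :
    {e : H.edgeSet | v ∈ (e : Sym2 V)}.ncard = H.degree v := by
  classical
  have himage : (Subtype.val '' {e : H.edgeSet | v ∈ (e : Sym2 V)}) = H.incidenceSet v := by
    ext e
    simp [incidenceSet, and_comm]
  rw [← card_incidenceSet_eq_degree, ← Set.ncard_image_of_injective _ Subtype.val_injective,
    himage, ← Nat.card_coe_set_eq, Nat.card_eq_fintype_card]

theorem exists_orientation_edgeColoring_edgeSet {r : ℕ}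
    (hΔ : ∀ v, H.degree v ≤ 2 * r) :
    ∃ (s t : H.edgeSet → V) (c : H.edgeSet → Fin r), (∀ e, s(s e, t e) = (e : Sym2 V)) ∧
      (Function.Injective fun e => (s e, c e)) ∧ (Function.Injective fun e => (t e, c e)) ∧
      ∀ v, Even (H.degree v) → c '' {e | s e = v} = c '' {e | t e = v} := by
  classical
  let a (e : H.edgeSet) : V := (Quot.out e.1).1
  let b (e : H.edgeSet) : V := (Quot.out e.1).2
  have hab : ∀ e : H.edgeSet, s(a e, b e) = (e : Sym2 V) := fun e => Quot.out_eq e.1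
  have hne : ∀ e, a e ≠ b e := fun e => H.ne_of_adj (by simpa [← hab e] using e.2)
  have hdegree : ∀ v, endpointDegree a b v = H.degree v := fun v => by
    rw [endpointDegree_eq_ncard hne, ← ncard_incident_edges]
    simp only [hab]
  obtain ⟨s, t, c, hends, hcs, hct, himage⟩ :=
    exists_orientation_edgeColoring (a := a) (b := b) fun v => (hdegree v).trans_le (hΔ v)
  exact ⟨s, t, c, fun e => (hends e).trans (hab e), hcs, hct,
    fun v hv => himage v ((hdegree v).symm ▸ hv)⟩

theorem stmt_1_general (r : ℕ) (hΔ : ∀ v, H.degree v ≤ 2 * r)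
    (hdeg : ∀ v, 2 * r - 2 ≤ H.degree v ∨ H.degree v ≤ 2) :
    ∃ c : Sym2 (V ⊕ H.edgeSet) → ℕ, IsCyclicIntervalColoring (fullSubdivision H) (2 * r) c := by
  classical
  obtain ⟨s, t, c, hends, hcs, hct, himage⟩ := exists_orientation_edgeColoring_edgeSet H hΔ
  have hne : ∀ e, s e ≠ t e := fun e => H.ne_of_adj (by simpa [← hends e] using e.2)
  have hvertex (v : V) := injOn_halfEdgeColor_incident hcs hct v
  have hedge (e : H.edgeSet) := injOn_halfEdgeColor_endpoints (s := s) (t := t) (c := c) e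
  have hedgecolors := image_halfEdgeColor_endpoints (c := c) hne
  have hpaired {v : V} (hv : Even (H.degree v)) := isPaired_image_halfEdgeColor hne (himage v hv)
  simp only [hends] at hvertex hedge hpaired hedgecolors
  refine ⟨subdivisionColoring (halfEdgeColor s c), isProperEdgeColoring_subdivisionColoring
    (fun v e _ => halfEdgeColor_mem_Icc v e) hvertex hedge, ?_⟩
  rintro (v | e)
  · have hcard := ((hvertex v).ncard_image).trans (ncard_incident_edges H v)
    rw [colorsAt_fullSubdivision_inl]
    exact isIntervalSet_or_isIntervalSet_sdiff
      (Set.image_subset_iff.2 fun e _ => halfEdgeColor_mem_Icc v e)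
      (hcard.symm ▸ hdeg v) fun hv => hpaired (hcard ▸ hv)
  · rw [colorsAt_fullSubdivision_inr, hedgecolors]
    exact .inl (isIntervalSet_pair _)

end CyclicInterval

/-- if `H` has maximum degree `2r` (`r ≥ 2`) and every vertex has degree
`≥ 2r - 2` or `≤ 2`, then the full subdivision of `H` has a cyclic interval `2r`-coloring. -/
theorem stmt_1 {V : Type*} [Fintype V] [DecidableEq V] (H : SimpleGraph V)
    [DecidableRel H.Adj] (r : ℕ) (hr : 2 ≤ r) (hΔ : H.maxDegree = 2 * r)
    (hdeg : ∀ v : V, 2 * r - 2 ≤ H.degree v ∨ H.degree v ≤ 2) :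
    ∃ c : Sym2 (V ⊕ H.edgeSet) → ℕ, IsCyclicIntervalColoring (fullSubdivision H) (2 * r) c :=
  stmt_1_general H r (fun v => hΔ ▸ H.degree_le_maxDegree v) hdeg
end

section
/- Every finite bipartite graph G with maximum degree Δ(G) = 4 admits a cyclic interval 4-coloring; consequently G is cyclically interval colorable and the least t for which G has a cyclic interval t-coloring equals 4. -/
open SimpleGraph

/-! Along a fixed-point-free involution, and even along two of them at once, the points can be
`2`-colored with alternating colors: if `f` and `g` are such involutions then `f` maps every cycle
of `f * g` to a different cycle, and so does `g`, with the same image. In a bipartite graph, pair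
up the edges at each vertex, leaving out at most one of them. The pairings at the vertices of one
part make up one involution of the edges and those at the other part a second one, so some
`2`-coloring of the edges alternates along both and hence splits the edges at every vertex evenly.

Split the edges like this, and then each of the two halves again. When all degrees are at most `4`,
the resulting four classes are matchings. Give the quarters of one half the colors `1` and `3`, and
those of the other half `2` and `4`. The only subsets of `{1, 2, 3, 4}` that are not cyclic
intervals are `{1, 3}` and `{2, 4}`, and they would require a vertex with two edges in one half and
none in the other. -/

open Function

section Involutions

variable {α β : Type*}

lemma exists_involutive_subsingleton_fixedPoints (α : Type*) :
    ∃ f : α → α, Involutive f ∧ (fixedPoints f).Subsingleton := by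
  rcases finite_or_infinite α with hα | hα
  · obtain ⟨n, ⟨φ⟩⟩ := Finite.exists_equiv_fin α
    refine ⟨fun a => φ.symm (φ a).rev, fun a => by simp, fun a ha b hb => φ.injective ?_⟩
    have ha : (φ a).rev = φ a := φ.symm_apply_eq.mp ha
    have hb : (φ b).rev = φ b := φ.symm_apply_eq.mp hb
    rw [Fin.ext_iff, Fin.val_rev] at ha hb
    exact Fin.ext (by omega)
  · obtain ⟨φ⟩ : Nonempty (α ≃ α ⊕ α) := Cardinal.eq.mp <| by
      rw [← Cardinal.add_def, Cardinal.add_eq_self (Cardinal.aleph0_le_mk α)]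
    refine ⟨fun a => φ.symm (φ a).swap, fun a => by simp, fun a ha => ?_⟩
    have ha : (φ a).swap = φ a := φ.symm_apply_eq.mp ha
    rcases h : φ a <;> simp [h] at ha

lemma exists_involutive_fiberwise (l : α → β) :
    ∃ f : α → α, Involutive f ∧ (∀ a, l (f a) = l a) ∧
      ∀ b, (l ⁻¹' {b} ∩ fixedPoints f).Subsingleton := by
  choose σ hσ hfix using fun b => exists_involutive_subsingleton_fixedPoints (l ⁻¹' {b})
  have hval (b : β) (a : α) (ha : l a = b) : (σ (l a) ⟨a, rfl⟩ : α) = σ b ⟨a, ha⟩ := by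
    subst ha; rfl
  refine ⟨fun a => σ (l a) ⟨a, rfl⟩, fun a => ?_, fun a => (σ (l a) ⟨a, rfl⟩).2, ?_⟩
  · exact (hval (l a) _ (σ (l a) ⟨a, rfl⟩).2).trans (congrArg Subtype.val (hσ (l a) ⟨a, rfl⟩))
  · rintro b a ⟨hab, ha⟩ a' ⟨hab', ha'⟩
    exact congrArg Subtype.val (hfix b (Subtype.ext ((hval b a hab).symm.trans ha))
      (Subtype.ext ((hval b a' hab').symm.trans ha')))

/-- The Boolean coloring `χ` alternates along `f`: it separates every point from its image under
`f`, unless the two coincide. -/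
def AlternatesAlong (χ : α → Bool) (f : α → α) : Prop :=
  ∀ a, f a ≠ a → χ (f a) = !χ a

lemma exists_alternatesAlong {f : α → α} (hf : Involutive f) :
    ∃ χ : α → Bool, AlternatesAlong χ f := by
  classical
  let _ : LinearOrder α := linearOrderOfSTO WellOrderingRel
  refine ⟨fun a => decide (a < f a), fun a ha => ?_⟩
  simp only [hf a, ← decide_not, not_lt, ha.le_iff_lt]

variable {f g : Equiv.Perm α}

lemma apply_zpow_mul_apply (hf : Involutive f) (hg : Involutive g) (k : ℤ) (a : α) :
    f (((f * g) ^ k) a) = ((f * g) ^ (-k)) (f a) := by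
  have hff : f * f = 1 := Equiv.ext hf
  have hgg : g * g = 1 := Equiv.ext hg
  have hsemiconj : SemiconjBy f (f * g) (f * g)⁻¹ := by
    rw [SemiconjBy, mul_inv_rev, inv_eq_of_mul_eq_one_right hff, inv_eq_of_mul_eq_one_right hgg,
      mul_assoc, hff, ← mul_assoc, hff, one_mul, mul_one]
  rw [zpow_neg, ← inv_zpow]
  exact DFunLike.congr_fun (hsemiconj.zpow_right k) a

lemma sameCycle_mul_apply_apply (hf : Involutive f) (hg : Involutive g) {a b : α}
    (h : (f * g).SameCycle a b) : (f * g).SameCycle (f a) (f b) := by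
  obtain ⟨k, rfl⟩ := h
  exact ⟨-k, (apply_zpow_mul_apply hf hg k a).symm⟩

-- If `(f * g) ^ k` takes `a` to `f a`, then `f` or `g` fixes the point half-way between them.
lemma not_sameCycle_mul_apply (hf : Involutive f) (hg : Involutive g) (hf' : ∀ a, f a ≠ a)
    (hg' : ∀ a, g a ≠ a) (a : α) : ¬ (f * g).SameCycle a (f a) := by
  rintro ⟨k, hk⟩
  have hreflect (j : ℤ) : f (((f * g) ^ j) a) = ((f * g) ^ (k - j)) a := by
    rw [apply_zpow_mul_apply hf hg, ← hk, ← Equiv.Perm.mul_apply, ← zpow_add, neg_add_eq_sub]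
  obtain ⟨j, rfl | rfl⟩ := k.even_or_odd'
  · exact hf' _ ((hreflect j).trans (by rw [two_mul, add_sub_cancel_right]))
  · refine hg' (((f * g) ^ j) a) (f.injective ?_)
    rw [hreflect j, show 2 * j + 1 - j = 1 + j by ring, zpow_one_add]
    rfl

lemma exists_alternatesAlong_and_of_forall_ne (hf : Involutive f) (hg : Involutive g)
    (hf' : ∀ a, f a ≠ a) (hg' : ∀ a, g a ≠ a) :
    ∃ χ : α → Bool, AlternatesAlong χ f ∧ AlternatesAlong χ g := by
  let s := Equiv.Perm.SameCycle.setoid (f * g)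
  let F : Quotient s → Quotient s :=
    Quotient.map f fun _ _ => sameCycle_mul_apply_apply hf hg
  have hF : Involutive F := Quotient.ind fun a => congrArg (Quotient.mk s) (hf a)
  have hF' (a : α) : F ⟦a⟧ ≠ ⟦a⟧ := fun h =>
    not_sameCycle_mul_apply hf hg hf' hg' a (Quotient.exact h).symm
  have hFg (a : α) : F ⟦a⟧ = ⟦g a⟧ := Quotient.sound ⟨-1, by
    rw [← apply_zpow_mul_apply hf hg, zpow_one, Equiv.Perm.mul_apply, hf]⟩
  obtain ⟨χ, hχ⟩ := exists_alternatesAlong hF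
  exact ⟨fun a => χ ⟦a⟧, fun a _ => hχ _ (hF' a),
    fun a _ => (congrArg χ (hFg a)).symm.trans (hχ _ (hF' a))⟩

open Classical in
/-- The lift of an involution `f` to two copies of its domain that acts as `f` on each copy, except
that it exchanges the two copies of a fixed point of `f`. It is used to remove fixed points. -/
noncomputable def doubling (f : α → α) (p : α × Bool) : α × Bool :=
  (f p.1, if f p.1 = p.1 then !p.2 else p.2)

lemma doubling_ne (f : α → α) (p : α × Bool) : doubling f p ≠ p := by
  by_cases h : f p.1 = p.1 <;> simp [doubling, Prod.ext_iff, h]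

lemma involutive_doubling {f : α → α} (hf : Involutive f) : Involutive (doubling f) := by
  rintro ⟨a, b⟩
  by_cases h : f a = a <;> simp [doubling, hf a, h, eq_comm (a := a)]

lemma exists_alternatesAlong_and {f g : α → α} (hf : Involutive f) (hg : Involutive g) :
    ∃ χ : α → Bool, AlternatesAlong χ f ∧ AlternatesAlong χ g := by
  obtain ⟨χ, hχf, hχg⟩ := exists_alternatesAlong_and_of_forall_ne
    (f := (involutive_doubling hf).toPerm) (g := (involutive_doubling hg).toPerm)
    (involutive_doubling hf) (involutive_doubling hg) (doubling_ne f) (doubling_ne g)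
  refine ⟨fun a => χ (a, false), fun a ha => ?_, fun a ha => ?_⟩
  · simpa [doubling, ha] using hχf (a, false) (doubling_ne f _)
  · simpa [doubling, ha] using hχg (a, false) (doubling_ne g _)

end Involutions

section EvenSplittings

variable {α β γ : Type*} {χ : α → Bool} {s : Set α}

/-- The two color classes of `χ` in `s` differ in size by at most one. Sizes are taken in `ℕ∞`, so
for infinite `s` this says that both classes are infinite. -/
def SplitsEvenly (χ : α → Bool) (s : Set α) : Prop :=
  ∀ b, (s ∩ χ ⁻¹' {b}).encard ≤ (s ∩ χ ⁻¹' {!b}).encard + 1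

lemma AlternatesAlong.splitsEvenly {f : α → α} (hχ : AlternatesAlong χ f) (hf : Injective f)
    (hs : Set.MapsTo f s s) (hfix : (s ∩ fixedPoints f).Subsingleton) : SplitsEvenly χ s := by
  intro b
  have hfixed : (s ∩ χ ⁻¹' {b} ∩ fixedPoints f).encard ≤ 1 :=
    Set.encard_le_one_iff_subsingleton.mpr (hfix.anti (by gcongr; exact Set.inter_subset_left))
  have hmoved : ((s ∩ χ ⁻¹' {b}) \ fixedPoints f).encard ≤ (s ∩ χ ⁻¹' {!b}).encard :=
    Set.encard_le_encard_of_injOn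
      (fun a ⟨⟨has, hab⟩, ha⟩ => ⟨hs has, (hχ a ha).trans (congrArg _ hab)⟩) hf.injOn
  rw [← Set.encard_sdiff_add_encard_inter _ (fixedPoints f)]
  exact add_le_add hmoved hfixed

/-- The edges of a bipartite multigraph with parts `β` and `γ` are the elements of `α`, with
endpoints given by `l` and `r`. -/
theorem exists_splitsEvenly_fibers (l : α → β) (r : α → γ) :
    ∃ χ : α → Bool, (∀ b, SplitsEvenly χ (l ⁻¹' {b})) ∧ ∀ c, SplitsEvenly χ (r ⁻¹' {c}) := by
  obtain ⟨f, hf, hlf, hf'⟩ := exists_involutive_fiberwise l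
  obtain ⟨g, hg, hrg, hg'⟩ := exists_involutive_fiberwise r
  obtain ⟨χ, hχf, hχg⟩ := exists_alternatesAlong_and hf hg
  exact ⟨χ, fun b => hχf.splitsEvenly hf.injective (fun a ha => (hlf a).trans ha) (hf' b),
    fun c => hχg.splitsEvenly hg.injective (fun a ha => (hrg a).trans ha) (hg' c)⟩

lemma SplitsEvenly.encard_inter_le (h : SplitsEvenly χ s) {k : ℕ} (hs : s.encard ≤ (2 * k : ℕ))
    (b : Bool) : (s ∩ χ ⁻¹' {b}).encard ≤ k := by
  have hb := h b
  have hcompl : s \ χ ⁻¹' {b} = s ∩ χ ⁻¹' {!b} := by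
    ext a; cases b <;> simp
  rw [← Set.encard_sdiff_add_encard_inter s (χ ⁻¹' {b}), hcompl] at hs
  obtain ⟨hm, hn⟩ := WithTop.add_ne_top.mp (ne_top_of_le_ne_top (ENat.natCast_ne_top _) hs)
  lift (s ∩ χ ⁻¹' {!b}).encard to ℕ using hm with m
  lift (s ∩ χ ⁻¹' {b}).encard to ℕ using hn with n
  norm_cast at hs hb ⊢
  omega

lemma SplitsEvenly.inter_nonempty_of_nontrivial (h : SplitsEvenly χ s) {b : Bool}
    (hb : (s ∩ χ ⁻¹' {b}).Nontrivial) : (s ∩ χ ⁻¹' {!b}).Nonempty := by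
  rw [Set.nonempty_iff_ne_empty]
  intro hempty
  have hle := h b
  rw [hempty, Set.encard_empty, zero_add] at hle
  exact hle.not_gt (Set.one_lt_encard_iff_nontrivial.mpr hb)

lemma SplitsEvenly.image_ne_pair (h : SplitsEvenly χ s) (ψ : α → Bool) {g : Bool × Bool → β}
    (hg : Injective g) (p : Bool) :
    (fun a => g (χ a, ψ a)) '' s ≠ {g (p, true), g (p, false)} := by
  intro heq
  have hattained (q : Bool) : ∃ a ∈ s, χ a = p ∧ ψ a = q := by
    have hq : g (p, q) ∈ (fun a => g (χ a, ψ a)) '' s := by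
      rw [heq]; cases q <;> simp
    obtain ⟨a, ha, hpq⟩ := hq
    exact ⟨a, ha, Prod.ext_iff.mp (hg hpq)⟩
  obtain ⟨a, ha, hχa, hψa⟩ := hattained true
  obtain ⟨b, hb, hχb, hψb⟩ := hattained false
  have hab : a ≠ b := by rintro rfl; simp [hψa] at hψb
  obtain ⟨c, hc, hχc⟩ := h.inter_nonempty_of_nontrivial ⟨a, ⟨ha, hχa⟩, b, ⟨hb, hχb⟩, hab⟩
  have hmem : g (χ c, ψ c) ∈ ({g (p, true), g (p, false)} : Set β) :=
    heq ▸ Set.mem_image_of_mem (fun a => g (χ a, ψ a)) hc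
  obtain hcp | hcp := hmem <;>
    exact p.not_ne_self (hχc.symm.trans (congrArg Prod.fst (hg hcp)))

end EvenSplittings

section EdgeColorings

variable {V K : Type*} {G : SimpleGraph V}

lemma encard_incidenceSet (G : SimpleGraph V) (v : V) [Fintype (G.neighborSet v)] :
    (G.incidenceSet v).encard = G.degree v := by
  classical
  rw [← G.card_incidenceFinset_eq_degree v, ← Set.encard_coe_eq_coe_finsetCard,
    coe_incidenceFinset]

lemma isGreatest_range_degree (G : SimpleGraph V) [Fintype V] [DecidableRel G.Adj] [Nonempty V] :
    IsGreatest (Set.range fun v => G.degree v) G.maxDegree := by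
  obtain ⟨v, hv⟩ := G.exists_maximal_degree_vertex
  exact ⟨⟨v, hv.symm⟩, Set.forall_mem_range.mpr G.degree_le_maxDegree⟩

theorem exists_splitsEvenly_incidenceSet (hbip : G.Colorable 2) (κ : Sym2 V → K) :
    ∃ χ : Sym2 V → Bool, ∀ v k, SplitsEvenly χ (G.incidenceSet v ∩ κ ⁻¹' {k}) := by
  obtain ⟨C⟩ := hbip
  -- The set of endpoints of `e` in part `i`: a singleton if `e` is an edge, and empty otherwise.
  let ends (i : Fin 2) (e : Sym2 V) : Set V := {w | C w = i ∧ e ∈ G.incidenceSet w}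
  have hends (v : V) (e : Sym2 V) : ends (C v) e = {v} ↔ e ∈ G.incidenceSet v := by
    refine ⟨fun h => (h ▸ Set.mem_singleton v : v ∈ ends (C v) e).2, fun hv => ?_⟩
    refine Set.Subset.antisymm (fun w ⟨hw, hwe⟩ => ?_) (Set.singleton_subset_iff.mpr ⟨rfl, hv⟩)
    by_contra hwv
    exact C.valid (G.adj_of_mem_incidenceSet hwv hwe hv) hw
  have hfiber (v : V) (k : K) :
      (fun e => (ends (C v) e, κ e)) ⁻¹' {({v}, k)} = G.incidenceSet v ∩ κ ⁻¹' {k} := by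
    ext e; simp [hends]
  obtain ⟨χ, h₀, h₁⟩ :=
    exists_splitsEvenly_fibers (fun e => (ends 0 e, κ e)) (fun e => (ends 1 e, κ e))
  refine ⟨χ, fun v k => hfiber v k ▸ ?_⟩
  obtain hv | hv : C v = 0 ∨ C v = 1 := by omega
  · exact hv ▸ h₀ ({v}, k)
  · exact hv ▸ h₁ ({v}, k)

lemma exists_splitsEvenly_and_injOn_incidenceSet (hbip : G.Colorable 2)
    (hdeg : ∀ v, (G.incidenceSet v).encard ≤ 4) :
    ∃ χ ψ : Sym2 V → Bool, ∀ v, SplitsEvenly χ (G.incidenceSet v) ∧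
      Set.InjOn (fun e => (χ e, ψ e)) (G.incidenceSet v) := by
  obtain ⟨χ, hχ⟩ := exists_splitsEvenly_incidenceSet hbip fun _ => ()
  obtain ⟨ψ, hψ⟩ := exists_splitsEvenly_incidenceSet hbip χ
  have hχ' (v : V) : SplitsEvenly χ (G.incidenceSet v) := by simpa using hχ v ()
  refine ⟨χ, ψ, fun v => ⟨hχ' v, fun e he e' he' heq => ?_⟩⟩
  obtain ⟨hχe, hψe⟩ := Prod.ext_iff.mp heq
  have hhalf := (hχ' v).encard_inter_le (k := 2) (by norm_num [hdeg v]) (χ e)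
  have hquarter := (hψ v (χ e)).encard_inter_le (k := 1) (by simpa using hhalf) (ψ e)
  rw [Nat.cast_one, Set.encard_le_one_iff_subsingleton] at hquarter
  exact hquarter ⟨⟨he, rfl⟩, rfl⟩ ⟨⟨he', hχe.symm⟩, hψe.symm⟩

lemma isProperEdgeColoring_iff {t : ℕ} {c : Sym2 V → ℕ} :
    IsProperEdgeColoring G t c ↔
      Set.MapsTo c G.edgeSet (Set.Icc 1 t) ∧ ∀ v, Set.InjOn c (G.incidenceSet v) := by
  refine and_congr_right fun _ => ⟨fun h v e he e' he' heq => ?_, fun h e he e' he' hne hv => ?_⟩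
  · by_contra hne
    exact h e he.1 e' he'.1 hne ⟨v, he.2, he'.2⟩ heq
  · obtain ⟨v, hve, hve'⟩ := hv
    exact fun heq => hne (h v ⟨he, hve⟩ ⟨he', hve'⟩ heq)

lemma IsProperEdgeColoring.degree_le {t : ℕ} {c : Sym2 V → ℕ} (hc : IsProperEdgeColoring G t c)
    (v : V) [Fintype (G.neighborSet v)] : G.degree v ≤ t := by
  obtain ⟨hrange, hinj⟩ := isProperEdgeColoring_iff.mp hc
  have h := Set.encard_le_encard_of_injOn (hrange.mono_left (G.incidenceSet_subset v)) (hinj v)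
  rw [encard_incidenceSet, ← Finset.coe_Icc, Set.encard_coe_eq_coe_finsetCard, Nat.card_Icc] at h
  exact_mod_cast h

end EdgeColorings

section FourColors

/-- The color in `{1, 2, 3, 4}` encoded by two bits. The first bit tells the classes `{1, 3}` and
`{2, 4}` apart, so that colors that agree in it are opposite on the cycle `1, 2, 3, 4`. -/
def bitColor : Bool × Bool → ℕ
  | (true, true) => 1
  | (false, true) => 2
  | (true, false) => 3
  | (false, false) => 4

lemma bitColor_injective : Injective bitColor := by decide

lemma bitColor_mem_Icc : ∀ p, bitColor p ∈ Set.Icc 1 4 := by decide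

lemma isIntervalSet_or_isIntervalSet_sdiff_of_ne {S : Set ℕ} (hS : S ⊆ Set.Icc 1 4)
    (h13 : S ≠ {1, 3}) (h24 : S ≠ {2, 4}) :
    IsIntervalSet S ∨ IsIntervalSet (Set.Icc 1 4 \ S) := by
  have hcases : ∀ T ∈ (Finset.Icc 1 4).powerset, T = {1, 3} ∨ T = {2, 4} ∨
      (∃ a ∈ Finset.Icc 1 4, ∃ b ∈ Finset.Icc 0 4, T = Finset.Icc a b) ∨
      ∃ a ∈ Finset.Icc 1 4, ∃ b ∈ Finset.Icc 0 4, Finset.Icc 1 4 \ T = Finset.Icc a b := by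
    decide
  lift S to Finset ℕ using (Set.finite_Icc 1 4).subset hS
  rw [← Finset.coe_Icc, Finset.coe_subset, ← Finset.mem_powerset] at hS
  obtain hT | hT | ⟨a, -, b, -, hab⟩ | ⟨a, -, b, -, hab⟩ := hcases S hS
  · exact absurd (by simp [hT]) h13
  · exact absurd (by simp [hT]) h24
  · exact Or.inl ⟨a, b, by rw [hab, Finset.coe_Icc]⟩
  · exact Or.inr ⟨a, b, by rw [← Finset.coe_Icc, ← Finset.coe_Icc, ← hab, Finset.coe_sdiff]⟩

theorem exists_isCyclicIntervalColoring_four {V : Type*} {G : SimpleGraph V}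
    (hbip : G.Colorable 2) (hdeg : ∀ v, (G.incidenceSet v).encard ≤ 4) :
    ∃ c : Sym2 V → ℕ, IsCyclicIntervalColoring G 4 c := by
  obtain ⟨χ, ψ, hχψ⟩ := exists_splitsEvenly_and_injOn_incidenceSet hbip hdeg
  refine ⟨fun e => bitColor (χ e, ψ e), isProperEdgeColoring_iff.mpr ⟨?_, fun v => ?_⟩, fun v => ?_⟩
  · exact fun e _ => bitColor_mem_Icc _
  · exact bitColor_injective.comp_injOn (hχψ v).2
  · have hne := (hχψ v).1.image_ne_pair ψ bitColor_injective
    exact isIntervalSet_or_isIntervalSet_sdiff_of_ne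
      (Set.image_subset_iff.mpr fun e _ => bitColor_mem_Icc _) (hne true) (hne false)

end FourColors

theorem stmt_3_general {V : Type*} (G : SimpleGraph V) [G.LocallyFinite]
    (hbip : G.Colorable 2) (hΔ : IsGreatest (Set.range fun v => G.degree v) 4) :
    (∃ c : Sym2 V → ℕ, IsCyclicIntervalColoring G 4 c) ∧
    IsLeast {t : ℕ | ∃ c : Sym2 V → ℕ, IsCyclicIntervalColoring G t c} 4 := by
  obtain ⟨⟨v, hv⟩, hle⟩ := hΔ
  have hdeg (w : V) : (G.incidenceSet w).encard ≤ 4 := by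
    rw [encard_incidenceSet]
    exact_mod_cast hle (Set.mem_range_self w)
  have hexists := exists_isCyclicIntervalColoring_four hbip hdeg
  refine ⟨hexists, hexists, ?_⟩
  rintro t ⟨c, hc, -⟩
  exact hv.ge.trans (hc.degree_le v)

/-- every finite bipartite graph with maximum degree `4` has a cyclic
interval `4`-coloring; consequently it is cyclically interval colorable and the least
`t` for which it has a cyclic interval `t`-coloring equals `4`. -/
theorem stmt_3 {V : Type*} [Fintype V] (G : SimpleGraph V) [DecidableRel G.Adj]
    (hbip : G.Colorable 2) (hΔ : G.maxDegree = 4) :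
    (∃ c : Sym2 V → ℕ, IsCyclicIntervalColoring G 4 c) ∧
    IsLeast {t : ℕ | ∃ c : Sym2 V → ℕ, IsCyclicIntervalColoring G t c} 4 := by
  have : Nonempty V := by
    by_contra! hempty
    simp at hΔ
  exact stmt_3_general G hbip (hΔ ▸ isGreatest_range_degree G)
end
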